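/- Let S = {S_i(x,y) = (c_i x + u_i, d_i x + b_i y + v_i)}_{i=1}^N be a triangular self-affine IFS on ℝ² with 0 < c_i < 1, 0 < b_i < 1, attractor Λ. Let s_x solve Σ_{i=1}^N c_i^{s_x} = 1 and s_y solve Σ_{i=1}^N b_i^{s_y} = 1; set ŝ_x = min(s_x,1), ŝ_y = min(s_y,1), and let d_x, d_y solve Σ c_i^{ŝ_x} b_i^{d_x−ŝ_x} = 1 and Σ b_i^{ŝ_y} c_i^{d_y−ŝ_y} = 1. Assume direction-x dominates, i.e. d_x ≥ d_y, assume Σ_{i=1}^N c_i < 1, and assume the horizontal IFS H = {h_i(x) = c_i x + u_i}_{i=1}^N satisfies Hochman's exponential separation condition. Then dim_H Λ = s_x. -/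

import Mathlib

open MeasureTheory Filter Set Topology
open scoped ENNReal

noncomputable section

/-- Composition of the affine maps `x ↦ λᵢ x + tᵢ` along a finite word. -/
def psiWord {N : ℕ} (lam t : Fin N → ℝ) : List (Fin N) → ℝ → ℝ
  | [] => id
  | i :: w => fun x => lam i * psiWord lam t w x + t i

/-- Hochman's exponential separation condition for the self-similar IFS `{x ↦ λᵢ x + tᵢ}`:
there are `ε > 0` and `n_k ↑ ∞` such that any two distinct words of length `n_k` whose
compositions have equal derivative have translation parts at distance `> ε^{n_k}`. -/
def HochmanESC (N : ℕ) (lam t : Fin N → ℝ) : Prop :=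
  ∃ ε > (0 : ℝ), ∃ nk : ℕ → ℕ, StrictMono nk ∧
    ∀ k, ∀ w1 w2 : Fin (nk k) → Fin N, w1 ≠ w2 →
      (∏ m, lam (w1 m)) = (∏ m, lam (w2 m)) →
        ε ^ (nk k) < |psiWord lam t (List.ofFn w1) 0 - psiWord lam t (List.ofFn w2) 0|

/-- A general (non-homogeneous) triangular affine map
`S_i(x,y) = (cᵢ x + uᵢ, dᵢ x + bᵢ y + vᵢ)`. -/
def SmapGen {N : ℕ} (cv bv u v d : Fin N → ℝ) (i : Fin N) (p : ℝ × ℝ) : ℝ × ℝ :=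
  (cv i * p.1 + u i, d i * p.1 + bv i * p.2 + v i)

namespace HE

open Real

/-- Finitely supported signed measures on the integers, with convolution as product. -/
abbrev Dst := AddMonoidAlgebra ℝ ℤ

/-- Probability measures. -/
structure IsP (p : Dst) : Prop where
  nn : ∀ x, 0 ≤ p.coeff x
  one : p.coeff.sum (fun _ v => v) = 1

/-- Shannon entropy. -/
def H (p : Dst) : ℝ := p.coeff.sum (fun _ v => negMulLog v)

/-- The point mass at `d`. -/
def pt (d : ℤ) : Dst := AddMonoidAlgebra.single d 1

lemma H_eq (p : Dst) {s : Finset ℤ} (hs : p.coeff.support ⊆ s) :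
    H p = ∑ x ∈ s, negMulLog (p.coeff x) :=
  Finsupp.sum_of_support_subset _ hs _ (by simp)

lemma one_eq {p : Dst} (hp : IsP p) {s : Finset ℤ} (hs : p.coeff.support ⊆ s) :
    ∑ x ∈ s, p.coeff x = 1 := by
  rw [← hp.one]
  exact (Finsupp.sum_of_support_subset _ hs (fun _ v => v) (fun _ _ => rfl)).symm

lemma IsP.le_one {p : Dst} (hp : IsP p) (x : ℤ) : p.coeff x ≤ 1 := by
  by_cases hx : x ∈ p.coeff.support
  · rw [← one_eq hp (Finset.Subset.refl _)]
    exact Finset.single_le_sum (f := fun x => p.coeff x) (fun i _ => hp.nn i) hx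
  · simp at hx; rw [hx]; exact zero_le_one

lemma H_nonneg {p : Dst} (hp : IsP p) : 0 ≤ H p := by
  rw [H_eq p (Finset.Subset.refl _)]
  exact Finset.sum_nonneg fun x _ => negMulLog_nonneg (hp.nn x) (hp.le_one x)

lemma coeff_mix {ι : Type*} (s : Finset ι) (w : ι → ℝ) (p : ι → Dst) (x : ℤ) :
    (∑ i ∈ s, w i • p i).coeff x = ∑ i ∈ s, w i * (p i).coeff x := by
  simp [Finsupp.finsetSum_apply]

lemma coeff_mul_pt (p : Dst) (d x : ℤ) : (p * pt d).coeff x = p.coeff (x - d) := by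
  rw [pt, AddMonoidAlgebra.coeff_mul_single_apply]; simp [sub_eq_add_neg]

lemma tot_mul_pt (p : Dst) (d : ℤ) (g : ℝ → ℝ) (hg : g 0 = 0) :
    (p * pt d).coeff.sum (fun _ v => g v) = p.coeff.sum (fun _ v => g v) := by
  rw [Finsupp.sum_of_support_subset (p * pt d).coeff
    (s := p.coeff.support.map (addRightEmbedding d)) _ _ (by simp [hg]), Finset.sum_map]
  · simp [Finsupp.sum, coeff_mul_pt]
  · intro x hx
    rw [Finsupp.mem_support_iff, coeff_mul_pt] at hx
    rw [Finset.mem_map]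
    exact ⟨x - d, by simpa using hx, by simp⟩

lemma H_mul_pt (p : Dst) (d : ℤ) : H (p * pt d) = H p :=
  tot_mul_pt p d negMulLog (by simp)

lemma IsP.mul_pt {p : Dst} (hp : IsP p) (d : ℤ) : IsP (p * pt d) :=
  ⟨fun x => by rw [coeff_mul_pt]; exact hp.nn _, by
    rw [← hp.one]; exact tot_mul_pt p d (fun v => v) rfl⟩

lemma pt_zero : pt 0 = 1 := rfl

lemma pt_add (a b : ℤ) : pt (a + b) = pt a * pt b := by
  rw [pt, pt, pt, AddMonoidAlgebra.single_mul_single, mul_one]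

lemma coeff_pt (a x : ℤ) : (pt a).coeff x = if a = x then 1 else 0 := by
  rw [pt, AddMonoidAlgebra.coeff_single, Finsupp.single_apply]

lemma IsP.pt (d : ℤ) : IsP (pt d) :=
  ⟨fun x => by rw [coeff_pt]; split_ifs <;> norm_num, by
    rw [HE.pt, AddMonoidAlgebra.coeff_single, Finsupp.sum_single_index rfl]⟩

lemma IsP.unit : IsP 1 := IsP.pt 0

lemma H_pt (d : ℤ) : H (pt d) = 0 := by
  rw [H, pt, AddMonoidAlgebra.coeff_single, Finsupp.sum_single_index negMulLog_zero,
    negMulLog_one]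

/-- common finset for a finite family -/
lemma exists_supp {ι : Type*} (s : Finset ι) (p : ι → Dst) :
    ∃ S : Finset ℤ, ∀ i ∈ s, (p i).coeff.support ⊆ S := by
  classical
  exact ⟨s.biUnion fun i => (p i).coeff.support, fun i hi => Finset.subset_biUnion_of_mem
    (fun i => (p i).coeff.support) hi⟩

lemma mix_supp {ι : Type*} {s : Finset ι} {w : ι → ℝ} {p : ι → Dst} {S : Finset ℤ}
    (hS : ∀ i ∈ s, (p i).coeff.support ⊆ S) : (∑ i ∈ s, w i • p i).coeff.support ⊆ S := by
  intro x hx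
  rw [Finsupp.mem_support_iff, coeff_mix] at hx
  obtain ⟨i, hi, h⟩ := Finset.exists_ne_zero_of_sum_ne_zero hx
  exact hS i hi (by rw [Finsupp.mem_support_iff]; exact right_ne_zero_of_mul h)

lemma IsP.mix {ι : Type*} {s : Finset ι} {w : ι → ℝ} {p : ι → Dst}
    (hw : ∀ i ∈ s, 0 ≤ w i) (hw1 : ∑ i ∈ s, w i = 1) (hp : ∀ i ∈ s, IsP (p i)) :
    IsP (∑ i ∈ s, w i • p i) := by
  obtain ⟨S, hS⟩ := exists_supp s p
  refine ⟨fun x => ?_, ?_⟩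
  · rw [coeff_mix]; exact Finset.sum_nonneg fun i hi => mul_nonneg (hw i hi) ((hp i hi).nn x)
  · rw [Finsupp.sum_of_support_subset _ (mix_supp hS) _ (fun _ _ => rfl)]
    simp_rw [coeff_mix]
    rw [Finset.sum_comm, ← hw1]
    refine Finset.sum_congr rfl fun i hi => ?_
    rw [← Finset.mul_sum, one_eq (hp i hi) (hS i hi), mul_one]

lemma as_mix (p : Dst) : p = ∑ z ∈ p.coeff.support, p.coeff z • pt z := by
  ext x
  rw [coeff_mix]
  simp only [coeff_pt, mul_ite, mul_one, mul_zero, Finset.sum_ite_eq']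
  simp

lemma mul_as_mix (p r : Dst) : p * r = ∑ z ∈ r.coeff.support, r.coeff z • (p * pt z) := by
  conv_lhs => rw [as_mix r]
  simp [Finset.mul_sum]

lemma IsP.mul {p q : Dst} (hp : IsP p) (hq : IsP q) : IsP (p * q) := by
  rw [mul_as_mix]
  exact IsP.mix (fun i _ => hq.nn i) (one_eq hq (Finset.Subset.refl _)) fun i _ => hp.mul_pt i

lemma IsP.pow {p : Dst} (hp : IsP p) (k : ℕ) : IsP (p ^ k) := by
  induction k with
  | zero => simpa using IsP.unit
  | succ k ih => rw [pow_succ]; exact ih.mul hp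

/-! ### Basic inequalities -/

lemma mul_log_ge {u v t : ℝ} (hu : 0 ≤ u) (hv : 0 ≤ v) (huv : v = 0 → u = 0) (ht : 0 < t) :
    u * log t + u - t * v ≤ u * log u - u * log v := by
  rcases hu.eq_or_lt with rfl | hu
  · simp; positivity
  have hv : 0 < v := lt_of_le_of_ne hv fun h => hu.ne' (huv h.symm)
  have := log_le_sub_one_of_pos (show 0 < t * v / u by positivity)
  rw [log_div (by positivity) hu.ne', log_mul ht.ne' hv.ne'] at this
  have h2 := mul_le_mul_of_nonneg_left this hu.le
  have h3 : u * (t * v / u - 1) = t * v - u := by field_simp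
  nlinarith

/-- log-sum inequality -/
lemma log_sum {ι : Type*} (s : Finset ι) (u v : ι → ℝ) (hu : ∀ i ∈ s, 0 ≤ u i)
    (hv : ∀ i ∈ s, 0 ≤ v i) (huv : ∀ i ∈ s, v i = 0 → u i = 0) :
    (∑ i ∈ s, u i) * log (∑ i ∈ s, u i) - (∑ i ∈ s, u i) * log (∑ i ∈ s, v i) ≤
      ∑ i ∈ s, (u i * log (u i) - u i * log (v i)) := by
  rcases (Finset.sum_nonneg hu).eq_or_lt with h | h
  · rw [← h]
    have h0 := (Finset.sum_eq_zero_iff_of_nonneg hu).1 h.symm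
    have h1 : ∑ i ∈ s, (u i * log (u i) - u i * log (v i)) = 0 :=
      Finset.sum_eq_zero fun i hi => by simp [h0 i hi]
    rw [h1]; simp
  have hV : 0 < ∑ i ∈ s, v i := by
    obtain ⟨i, hi, h⟩ := Finset.exists_ne_zero_of_sum_ne_zero h.ne'
    exact Finset.sum_pos' hv ⟨i, hi, lt_of_le_of_ne (hv i hi) fun h' => h (huv i hi h'.symm)⟩
  set a := ∑ i ∈ s, u i
  set b := ∑ i ∈ s, v i
  have key := Finset.sum_le_sum fun i hi =>
    mul_log_ge (hu i hi) (hv i hi) (huv i hi) (show 0 < a / b by positivity)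
  refine le_trans (le_of_eq ?_) key
  rw [Finset.sum_sub_distrib, Finset.sum_add_distrib, ← Finset.sum_mul, ← Finset.mul_sum]
  change _ = a * log (a / b) + a - a / b * b
  rw [log_div h.ne' hV.ne']
  field_simp
  ring

/-- Gibbs inequality -/
lemma gibbs {p : Dst} (hp : IsP p) {s : Finset ℤ} (hs : p.coeff.support ⊆ s) (q : ℤ → ℝ)
    (hq : ∀ x ∈ s, 0 < q x) (hq1 : ∑ x ∈ s, q x ≤ 1) :
    H p ≤ ∑ x ∈ s, p.coeff x * (-log (q x)) := by
  have h := log_sum s (fun x => p.coeff x) q (fun x _ => hp.nn x) (fun x hx => (hq x hx).le)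
    (fun x hx h => absurd h (hq x hx).ne')
  rw [one_eq hp hs] at h
  have h2 : log (∑ x ∈ s, q x) ≤ 0 := log_nonpos (Finset.sum_nonneg fun x hx => (hq x hx).le) hq1
  rw [H_eq p hs]
  rw [Finset.sum_sub_distrib] at h
  simp only [negMulLog, mul_neg, Finset.sum_neg_distrib, neg_mul]
  simp at h
  linarith

lemma H_le_log_card {p : Dst} (hp : IsP p) {s : Finset ℤ} (hs : p.coeff.support ⊆ s) :
    H p ≤ log s.card := by
  have hne : s.Nonempty := by
    by_contra h
    have := one_eq hp hs
    rw [Finset.not_nonempty_iff_eq_empty.1 h] at this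
    simp at this
  have hc : (0 : ℝ) < s.card := by exact_mod_cast hne.card_pos
  refine (gibbs hp hs (fun _ => (s.card : ℝ)⁻¹) (fun _ _ => by positivity) (by
    simp [hc.ne'])).trans (le_of_eq ?_)
  rw [← Finset.sum_mul, one_eq hp hs]; simp

lemma H_ge_of_atoms {p : Dst} (hp : IsP p) {c : ℝ} (hc : ∀ x, p.coeff x ≤ c) :
    -log c ≤ H p := by
  have h1 := one_eq hp (Finset.Subset.refl _)
  rw [H_eq p (Finset.Subset.refl _)]
  calc -log c = ∑ x ∈ p.coeff.support, p.coeff x * (-log c) := by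
        rw [← Finset.sum_mul, h1, one_mul]
    _ ≤ _ := by
        refine Finset.sum_le_sum fun x hx => ?_
        rw [Finsupp.mem_support_iff] at hx
        have hpos := lt_of_le_of_ne (hp.nn x) (Ne.symm hx)
        have := log_le_log hpos (hc x)
        simp only [negMulLog]
        nlinarith

/-- concavity of entropy -/
lemma H_concave {ι : Type*} {s : Finset ι} {w : ι → ℝ} {p : ι → Dst}
    (hw : ∀ i ∈ s, 0 ≤ w i) (hw1 : ∑ i ∈ s, w i = 1) (hp : ∀ i ∈ s, IsP (p i)) :
    ∑ i ∈ s, w i * H (p i) ≤ H (∑ i ∈ s, w i • p i) := by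
  obtain ⟨S, hS⟩ := exists_supp s p
  rw [H_eq _ (mix_supp hS), Finset.sum_congr rfl fun i hi => by rw [H_eq _ (hS i hi)]]
  simp_rw [Finset.mul_sum]
  rw [Finset.sum_comm]
  refine Finset.sum_le_sum fun x _ => ?_
  rw [coeff_mix]
  simpa using concaveOn_negMulLog.le_map_sum hw hw1 (p := fun i => (p i).coeff x)
    (fun i hi => (hp i hi).nn x)

/-- pointwise sublinearity used for data processing -/
lemma phi_sublinear {ι κ : Type*} (s : Finset ι) (t : Finset κ) (w : ι → ℝ) (r : κ → ℝ)
    (a : ι → κ → ℝ) (hw : ∀ i ∈ s, 0 ≤ w i) (hr : ∀ z ∈ t, 0 ≤ r z)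
    (ha : ∀ i ∈ s, ∀ z ∈ t, 0 ≤ a i z) :
    negMulLog (∑ i ∈ s, w i * ∑ z ∈ t, r z * a i z) -
        ∑ i ∈ s, w i * negMulLog (∑ z ∈ t, r z * a i z) ≤
      ∑ z ∈ t, r z * (negMulLog (∑ i ∈ s, w i * a i z) - ∑ i ∈ s, w i * negMulLog (a i z)) := by
  set V : κ → ℝ := fun z => r z * ∑ i ∈ s, w i * a i z with hV
  have hVs : ∑ i ∈ s, w i * ∑ z ∈ t, r z * a i z = ∑ z ∈ t, V z := by
    simp_rw [hV, Finset.mul_sum]; rw [Finset.sum_comm]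
    exact Finset.sum_congr rfl fun z _ => Finset.sum_congr rfl fun i _ => by ring
  have hVnn : ∀ z ∈ t, 0 ≤ V z := fun z hz =>
    mul_nonneg (hr z hz) (Finset.sum_nonneg fun i hi => mul_nonneg (hw i hi) (ha i hi z hz))
  have key : ∀ i ∈ s, w i * ((∑ z ∈ t, r z * a i z) * log (∑ z ∈ t, r z * a i z) -
      (∑ z ∈ t, r z * a i z) * log (∑ z ∈ t, V z)) ≤
      w i * ∑ z ∈ t, (r z * a i z * log (r z * a i z) - r z * a i z * log (V z)) := by
    intro i hi
    rcases (hw i hi).eq_or_lt with h | h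
    · simp [← h]
    refine mul_le_mul_of_nonneg_left ?_ h.le
    refine log_sum t _ _ (fun z hz => mul_nonneg (hr z hz) (ha i hi z hz)) hVnn ?_
    intro z hz h0
    rcases mul_eq_zero.1 h0 with h1 | h1
    · simp [h1]
    · have := (Finset.sum_eq_zero_iff_of_nonneg
        fun i hi => mul_nonneg (hw i hi) (ha i hi z hz)).1 h1 i hi
      have : a i z = 0 := by
        rcases mul_eq_zero.1 this with h2 | h2
        · exact absurd h2 h.ne'
        · exact h2
      simp [this]
  have key2 := Finset.sum_le_sum key
  have e1 : negMulLog (∑ i ∈ s, w i * ∑ z ∈ t, r z * a i z) -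
        ∑ i ∈ s, w i * negMulLog (∑ z ∈ t, r z * a i z) =
      ∑ i ∈ s, w i * ((∑ z ∈ t, r z * a i z) * log (∑ z ∈ t, r z * a i z) -
      (∑ z ∈ t, r z * a i z) * log (∑ z ∈ t, V z)) := by
    simp_rw [mul_sub, Finset.sum_sub_distrib, ← mul_assoc]
    rw [← Finset.sum_mul, hVs]
    simp only [negMulLog, mul_neg, neg_mul, Finset.sum_neg_distrib, ← mul_assoc]
    ring
  have e2 : ∑ i ∈ s, w i * ∑ z ∈ t, (r z * a i z * log (r z * a i z) - r z * a i z * log (V z)) =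
      ∑ z ∈ t, r z * (negMulLog (∑ i ∈ s, w i * a i z) - ∑ i ∈ s, w i * negMulLog (a i z)) := by
    simp_rw [Finset.mul_sum]
    rw [Finset.sum_comm]
    refine Finset.sum_congr rfl fun z hz => ?_
    have : ∀ i ∈ s, w i * (r z * a i z * log (r z * a i z) - r z * a i z * log (V z)) =
        r z * (w i * a i z * (- log (∑ i ∈ s, w i * a i z)) - w i * negMulLog (a i z)) := by
      intro i hi
      rcases (hr z hz).eq_or_lt with h | h
      · simp [← h]
      rcases (hw i hi).eq_or_lt with h' | h'
      · simp [← h']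
      rcases (ha i hi z hz).eq_or_lt with h'' | h''
      · simp [← h'']
      have hpos : 0 < ∑ i ∈ s, w i * a i z := Finset.sum_pos'
        (fun i hi => mul_nonneg (hw i hi) (ha i hi z hz)) ⟨i, hi, mul_pos h' h''⟩
      simp only [hV]
      rw [log_mul h.ne' h''.ne', log_mul h.ne' hpos.ne']
      simp only [negMulLog]
      ring
    rw [Finset.sum_congr rfl this, ← Finset.mul_sum, Finset.sum_sub_distrib, ← Finset.sum_mul]
    simp only [negMulLog]
    ring
  rw [e1, ← e2]; exact key2

/-- data processing for mixture information -/
lemma data_proc {ι : Type*} {s : Finset ι} {w : ι → ℝ} {p : ι → Dst} {r : Dst}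
    (hw : ∀ i ∈ s, 0 ≤ w i) (hp : ∀ i ∈ s, IsP (p i)) (hr : IsP r) :
    H ((∑ i ∈ s, w i • p i) * r) - ∑ i ∈ s, w i * H (p i * r) ≤
      H (∑ i ∈ s, w i • p i) - ∑ i ∈ s, w i * H (p i) := by
  classical
  set t := r.coeff.support
  obtain ⟨S, hS⟩ := exists_supp (s ×ˢ t) (fun iz => p iz.1 * pt iz.2)
  have hS' : ∀ z ∈ t, ∀ i ∈ s, (p i * pt z).coeff.support ⊆ S := fun z hz i hi =>
    hS (i, z) (Finset.mem_product.2 ⟨hi, hz⟩)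
  have hmul : ∀ i ∈ s, (p i * r).coeff.support ⊆ S := by
    intro i hi; rw [mul_as_mix]; exact mix_supp fun z hz => hS' z hz i hi
  have e0 : (∑ i ∈ s, w i • p i) * r = ∑ i ∈ s, w i • (p i * r) := by
    simp [Finset.sum_mul]
  have ez : ∀ z, (∑ i ∈ s, w i • p i) * pt z = ∑ i ∈ s, w i • (p i * pt z) := by
    intro z; simp [Finset.sum_mul]
  have L : H ((∑ i ∈ s, w i • p i) * r) - ∑ i ∈ s, w i * H (p i * r) =
      ∑ x ∈ S, (negMulLog (∑ i ∈ s, w i * ∑ z ∈ t, r.coeff z * (p i * pt z).coeff x) -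
        ∑ i ∈ s, w i * negMulLog (∑ z ∈ t, r.coeff z * (p i * pt z).coeff x)) := by
    have e1 : ∑ i ∈ s, w i * H (p i * r) =
        ∑ i ∈ s, w i * ∑ x ∈ S, negMulLog ((p i * r).coeff x) :=
      Finset.sum_congr rfl fun i hi => by rw [H_eq _ (hmul i hi)]
    rw [e0, H_eq _ (mix_supp hmul), e1]
    simp_rw [Finset.mul_sum]
    rw [Finset.sum_comm, ← Finset.sum_sub_distrib]
    refine Finset.sum_congr rfl fun x _ => ?_
    have : ∀ i, (p i * r).coeff x = ∑ z ∈ t, r.coeff z * (p i * pt z).coeff x := by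
      intro i; conv_lhs => rw [mul_as_mix, coeff_mix]
    rw [coeff_mix]
    simp_rw [this, Finset.mul_sum]
  have Rz : ∀ z ∈ t, H (∑ i ∈ s, w i • p i) - ∑ i ∈ s, w i * H (p i) =
      ∑ x ∈ S, (negMulLog (∑ i ∈ s, w i * (p i * pt z).coeff x) -
        ∑ i ∈ s, w i * negMulLog ((p i * pt z).coeff x)) := by
    intro z hz
    have e1 : ∑ i ∈ s, w i * H (p i) =
        ∑ i ∈ s, w i * ∑ x ∈ S, negMulLog ((p i * pt z).coeff x) :=
      Finset.sum_congr rfl fun i hi => by rw [← H_mul_pt (p i) z, H_eq _ (hS' z hz i hi)]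
    rw [e1, ← H_mul_pt _ z, ez, H_eq _ (mix_supp (hS' z hz))]
    simp_rw [Finset.mul_sum]
    rw [Finset.sum_comm, ← Finset.sum_sub_distrib]
    refine Finset.sum_congr rfl fun x _ => ?_
    rw [coeff_mix]
  have R : H (∑ i ∈ s, w i • p i) - ∑ i ∈ s, w i * H (p i) =
      ∑ z ∈ t, r.coeff z * (H (∑ i ∈ s, w i • p i) - ∑ i ∈ s, w i * H (p i)) := by
    rw [← Finset.sum_mul, one_eq hr (Finset.Subset.refl _), one_mul]
  have R2 : ∑ z ∈ t, r.coeff z * (H (∑ i ∈ s, w i • p i) - ∑ i ∈ s, w i * H (p i)) =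
      ∑ z ∈ t, r.coeff z * ∑ x ∈ S, (negMulLog (∑ i ∈ s, w i * (p i * pt z).coeff x) -
        ∑ i ∈ s, w i * negMulLog ((p i * pt z).coeff x)) :=
    Finset.sum_congr rfl fun z hz => by rw [Rz z hz]
  rw [L, R, R2]
  simp_rw [Finset.mul_sum (s := S)]
  rw [Finset.sum_comm]
  refine Finset.sum_le_sum fun x _ => ?_
  exact phi_sublinear s t w (fun z => r.coeff z) (fun i z => (p i * pt z).coeff x) hw
    (fun z _ => hr.nn z) (fun i hi z _ => ((hp i hi).mul_pt z).nn x)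

/-- submodularity: the entropy increment from adding `y` decreases -/
lemma submod {q y r : Dst} (hq : IsP q) (hy : IsP y) (hr : IsP r) :
    H (q * y * r) - H (q * r) ≤ H (q * y) - H q := by
  have h := data_proc (s := y.coeff.support) (w := fun z => y.coeff z) (p := fun z => q * pt z)
    (r := r) (fun z _ => hy.nn z) (fun z _ => hq.mul_pt z) hr
  rw [← mul_as_mix] at h
  have e : ∀ z, H (q * pt z * r) = H (q * r) := fun z => by
    rw [mul_right_comm, H_mul_pt]
  simp_rw [e, H_mul_pt, ← Finset.sum_mul, one_eq hy (Finset.Subset.refl _), one_mul] at h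
  exact h

lemma H_le_mul {q y : Dst} (hq : IsP q) (hy : IsP y) : H q ≤ H (q * y) := by
  have h := H_concave (s := y.coeff.support) (w := fun z => y.coeff z) (p := fun z => q * pt z)
    (fun z _ => hy.nn z) (one_eq hy (Finset.Subset.refl _)) (fun z _ => hq.mul_pt z)
  rw [← mul_as_mix] at h
  simpa [H_mul_pt, ← Finset.sum_mul, one_eq hy (Finset.Subset.refl _)] using h

lemma H_le_mul' {q y : Dst} (hq : IsP q) (hy : IsP y) : H q ≤ H (y * q) := by
  rw [mul_comm]; exact H_le_mul hq hy

/-- Kaimanovich and Vershik -/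
lemma kv {q y : Dst} (hq : IsP q) (hy : IsP y) (k : ℕ) :
    H (q * y ^ k) - H q ≤ k * (H (q * y) - H q) := by
  induction k with
  | zero => simp
  | succ k ih =>
    have := submod hq hy (hy.pow k)
    have e : q * y ^ (k + 1) = q * y * y ^ k := by ring
    rw [e]; push_cast; linarith

/-! ### Mixtures -/

lemma sum_negMulLog_ge {ι : Type*} (s : Finset ι) (a : ι → ℝ) (ha : ∀ i ∈ s, 0 ≤ a i) :
    negMulLog (∑ i ∈ s, a i) ≤ ∑ i ∈ s, negMulLog (a i) := by
  simp only [negMulLog, neg_mul, Finset.sum_neg_distrib, Finset.sum_mul, neg_le_neg_iff]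
  refine Finset.sum_le_sum fun i hi => ?_
  rcases (ha i hi).eq_or_lt with h | h
  · simp [← h]
  exact mul_le_mul_of_nonneg_left (log_le_log h (Finset.single_le_sum ha hi)) h.le

lemma sum_negMulLog_le {ι : Type*} (s : Finset ι) (a : ι → ℝ) (ha : ∀ i ∈ s, 0 ≤ a i)
    (C : ℝ) (hC : ((s.filter fun i => a i ≠ 0).card : ℝ) ≤ C) :
    ∑ i ∈ s, negMulLog (a i) ≤ negMulLog (∑ i ∈ s, a i) + (∑ i ∈ s, a i) * log C := by
  classical
  set s' := s.filter fun i => a i ≠ 0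
  have e1 : ∑ i ∈ s, a i = ∑ i ∈ s', a i := (Finset.sum_filter_ne_zero s).symm
  have e2 : ∑ i ∈ s, negMulLog (a i) = ∑ i ∈ s', negMulLog (a i) := by
    symm
    refine Finset.sum_subset (Finset.filter_subset _ _) fun i hi h => ?_
    have : a i = 0 := by by_contra h0; exact h (Finset.mem_filter.2 ⟨hi, h0⟩)
    simp [this]
  rw [e1, e2]
  have h := log_sum s' a (fun _ => 1) (fun i hi => ha i (Finset.mem_filter.1 hi).1)
    (fun _ _ => zero_le_one) (fun _ _ h => absurd h one_ne_zero)
  simp at h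
  rcases s'.eq_empty_or_nonempty with h0 | h0
  · simp [h0]
  have : log s'.card ≤ log C := log_le_log (by exact_mod_cast h0.card_pos) hC
  have h3 : 0 ≤ ∑ i ∈ s', a i := Finset.sum_nonneg fun i hi => ha i (Finset.mem_filter.1 hi).1
  simp only [negMulLog, neg_mul, Finset.sum_neg_distrib]
  nlinarith

lemma mix_split {ι : Type*} {s : Finset ι} {w : ι → ℝ} {p : ι → Dst} {S : Finset ℤ}
    (hp : ∀ i ∈ s, IsP (p i)) (hS : ∀ i ∈ s, (p i).coeff.support ⊆ S) :
    ∑ i ∈ s, negMulLog (w i) + ∑ i ∈ s, w i * H (p i) =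
      ∑ x ∈ S, ∑ i ∈ s, negMulLog (w i * (p i).coeff x) := by
  rw [Finset.sum_comm, ← Finset.sum_add_distrib]
  refine Finset.sum_congr rfl fun i hi => ?_
  simp_rw [negMulLog_mul]
  rw [Finset.sum_add_distrib, ← Finset.sum_mul, one_eq (hp i hi) (hS i hi), ← Finset.mul_sum,
    ← H_eq _ (hS i hi), one_mul]

lemma H_mix_le {ι : Type*} {s : Finset ι} {w : ι → ℝ} {p : ι → Dst}
    (hw : ∀ i ∈ s, 0 ≤ w i) (hp : ∀ i ∈ s, IsP (p i)) :
    H (∑ i ∈ s, w i • p i) ≤ ∑ i ∈ s, negMulLog (w i) + ∑ i ∈ s, w i * H (p i) := by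
  obtain ⟨S, hS⟩ := exists_supp s p
  rw [mix_split hp hS, H_eq _ (mix_supp hS)]
  refine Finset.sum_le_sum fun x _ => ?_
  rw [coeff_mix]
  exact sum_negMulLog_ge _ _ fun i hi => mul_nonneg (hw i hi) ((hp i hi).nn x)

lemma H_mix_ge {ι : Type*} {s : Finset ι} {w : ι → ℝ} {p : ι → Dst}
    (hw : ∀ i ∈ s, 0 ≤ w i) (hw1 : ∑ i ∈ s, w i = 1) (hp : ∀ i ∈ s, IsP (p i)) (C : ℝ)
    (hC : ∀ x, ((s.filter fun i => (p i).coeff x ≠ 0).card : ℝ) ≤ C) :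
    ∑ i ∈ s, negMulLog (w i) + ∑ i ∈ s, w i * H (p i) ≤ H (∑ i ∈ s, w i • p i) + log C := by
  obtain ⟨S, hS⟩ := exists_supp s p
  have hP := IsP.mix hw hw1 hp
  have e : log C = ∑ x ∈ S, (∑ i ∈ s, w i • p i).coeff x * log C := by
    rw [← Finset.sum_mul, one_eq hP (mix_supp hS), one_mul]
  rw [mix_split hp hS, H_eq _ (mix_supp hS), e, ← Finset.sum_add_distrib]
  refine Finset.sum_le_sum fun x _ => ?_
  rw [coeff_mix]
  refine sum_negMulLog_le _ _ (fun i hi => mul_nonneg (hw i hi) ((hp i hi).nn x)) C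
    (le_trans ?_ (hC x))
  exact_mod_cast Finset.card_le_card fun i hi => by
    rw [Finset.mem_filter] at hi ⊢
    exact ⟨hi.1, right_ne_zero_of_mul hi.2⟩

end HE

namespace HE

open Real

/-- law of `F` under the uniform measure on the finite set `s`. -/
def law {Ω : Type*} (s : Finset Ω) (F : Ω → ℤ) : Dst := ∑ ω ∈ s, (s.card : ℝ)⁻¹ • pt (F ω)

section lawsec

variable {Ω Ω' : Type*} {s : Finset Ω} {t : Finset Ω'}

lemma card_mul_inv (hs : s.Nonempty) : ∑ _ω ∈ s, (s.card : ℝ)⁻¹ = 1 := by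
  have hc : (s.card : ℝ) ≠ 0 := by exact_mod_cast hs.card_pos.ne'
  simp [hc]

lemma IsP.law (hs : s.Nonempty) (F : Ω → ℤ) : IsP (law s F) :=
  IsP.mix (fun _ _ => by positivity) (card_mul_inv hs) fun _ _ => IsP.pt _

lemma law_congr {F G : Ω → ℤ} (h : ∀ ω ∈ s, F ω = G ω) : law s F = law s G :=
  Finset.sum_congr rfl fun ω hω => by rw [h ω hω]

lemma law_const (hs : s.Nonempty) {F : Ω → ℤ} {a : ℤ} (h : ∀ ω ∈ s, F ω = a) :
    law s F = pt a := by
  rw [law_congr h, law, ← Finset.sum_smul, card_mul_inv hs, one_smul]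

lemma law_mul (F : Ω → ℤ) (G : Ω' → ℤ) :
    law s F * law t G = law (s ×ˢ t) fun x => F x.1 + G x.2 := by
  rw [law, law, law, Finset.sum_mul_sum, Finset.sum_product]
  refine Finset.sum_congr rfl fun i _ => Finset.sum_congr rfl fun j _ => ?_
  rw [pt_add, smul_mul_smul_comm, Finset.card_product]
  push_cast
  rw [mul_inv]

lemma law_fst (F : Ω → ℤ) (ht : t.Nonempty) : law (s ×ˢ t) (fun x => F x.1) = law s F := by
  have := law_mul (s := s) (t := t) F (fun _ => 0)
  rw [law_const ht (a := 0) (fun _ _ => rfl), pt_zero, mul_one] at this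
  rw [this]; simp

lemma law_snd (F : Ω' → ℤ) (hs : s.Nonempty) : law (s ×ˢ t) (fun x => F x.2) = law t F := by
  have := law_mul (s := s) (t := t) (fun _ => 0) F
  rw [law_const hs (a := 0) (fun _ _ => rfl), pt_zero, one_mul] at this
  rw [this]; simp

lemma law_shift (F : Ω → ℤ) (a : ℤ) : law s (fun ω => F ω + a) = law s F * pt a := by
  simp [law, pt_add, Finset.sum_mul]

lemma law_supp {F : Ω → ℤ} {x : ℤ} (h : (law s F).coeff x ≠ 0) : ∃ ω ∈ s, F ω = x := by
  rw [law, coeff_mix] at h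
  obtain ⟨i, hi, h⟩ := Finset.exists_ne_zero_of_sum_ne_zero h
  have := right_ne_zero_of_mul h
  rw [coeff_pt] at this
  exact ⟨i, hi, by simpa using this⟩

lemma law_coeff (F : Ω → ℤ) (x : ℤ) :
    (law s F).coeff x = ((s.filter fun ω => F ω = x).card : ℝ) / s.card := by
  rw [law, coeff_mix]
  simp only [coeff_pt]
  simp only [mul_ite, mul_one, mul_zero, div_eq_mul_inv]
  rw [← Finset.sum_filter, Finset.sum_const, nsmul_eq_mul]

lemma law_supp_image (F : Ω → ℤ) : (law s F).coeff.support ⊆ s.image F := by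
  intro x hx
  rw [Finsupp.mem_support_iff] at hx
  obtain ⟨ω, h, h'⟩ := law_supp hx
  exact Finset.mem_image.2 ⟨ω, h, h'⟩

lemma law_map {Ω'' : Type*} (e : Ω ↪ Ω'') (F : Ω'' → ℤ) :
    law (s.map e) F = law s (fun ω => F (e ω)) := by
  simp [law]

lemma law_equiv [Fintype Ω] [Fintype Ω'] (e : Ω ≃ Ω') (F : Ω' → ℤ) :
    law Finset.univ F = law Finset.univ (fun ω => F (e ω)) := by
  rw [← Finset.map_univ_equiv e, law_map]; rfl

/-- the cell of `G` -/
def cell (s : Finset Ω) (G : Ω → ℤ) (j : ℤ) : Finset Ω := s.filter fun ω => G ω = j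

lemma mem_cell {G : Ω → ℤ} {j : ℤ} {ω : Ω} : ω ∈ cell s G j ↔ ω ∈ s ∧ G ω = j := Finset.mem_filter

lemma cell_nonempty {G : Ω → ℤ} {j : ℤ} (hj : j ∈ s.image G) : (cell s G j).Nonempty := by
  obtain ⟨ω, h, h'⟩ := Finset.mem_image.1 hj
  exact ⟨ω, mem_cell.2 ⟨h, h'⟩⟩

lemma law_cond (F G : Ω → ℤ) :
    law s F = ∑ j ∈ s.image G, (law s G).coeff j • law (cell s G j) F := by
  rw [law, ← Finset.sum_fiberwise_of_maps_to (t := s.image G) (g := G)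
    (fun ω h => Finset.mem_image_of_mem _ h)]
  refine Finset.sum_congr rfl fun j hj => ?_
  have h := cell_nonempty hj
  have hc : ((cell s G j).card : ℝ) ≠ 0 := by exact_mod_cast h.card_pos.ne'
  rw [law_coeff, law, Finset.smul_sum]
  refine Finset.sum_congr rfl fun ω _ => ?_
  rw [smul_smul]
  congr 1
  change _ = ((cell s G j).card : ℝ) / _ * _
  field_simp

lemma law_w_nn (G : Ω → ℤ) (hs : s.Nonempty) (j : ℤ) : 0 ≤ (law s G).coeff j := (IsP.law hs G).nn j

lemma law_w_sum (G : Ω → ℤ) (hs : s.Nonempty) : ∑ j ∈ s.image G, (law s G).coeff j = 1 :=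
  one_eq (IsP.law hs G) (law_supp_image G)

lemma law_w_H (G : Ω → ℤ) : ∑ j ∈ s.image G, negMulLog ((law s G).coeff j) = H (law s G) :=
  (H_eq _ (law_supp_image G)).symm

lemma H_law_le_cond (F G : Ω → ℤ) (hs : s.Nonempty) :
    H (law s F) ≤ H (law s G) + ∑ j ∈ s.image G, (law s G).coeff j * H (law (cell s G j) F) := by
  conv_lhs => rw [law_cond F G]
  rw [← law_w_H G]
  exact H_mix_le (fun j _ => law_w_nn G hs j) fun j hj => IsP.law (cell_nonempty hj) F

lemma window (F G : Ω → ℤ) (hs : s.Nonempty) (φ : ℤ → ℤ) (C : ℕ)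
    (h1 : ∀ ω ∈ s, φ (G ω) ≤ F ω) (h2 : ∀ ω ∈ s, F ω < φ (G ω) + C) :
    H (law s F) ≤ H (law s G) + log C := by
  refine (H_law_le_cond F G hs).trans ?_
  gcongr
  calc _ ≤ ∑ j ∈ s.image G, (law s G).coeff j * log C := by
        refine Finset.sum_le_sum fun j hj => ?_
        refine mul_le_mul_of_nonneg_left ?_ (law_w_nn G hs j)
        refine (H_le_log_card (IsP.law (cell_nonempty hj) F) (s := Finset.Ico (φ j) (φ j + C))
          ?_).trans (by simp)
        intro x hx
        rw [Finsupp.mem_support_iff] at hx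
        obtain ⟨ω, h, rfl⟩ := law_supp hx
        obtain ⟨h', rfl⟩ := mem_cell.1 h
        exact Finset.mem_Ico.2 ⟨h1 ω h', h2 ω h'⟩
    _ = log C := by rw [← Finset.sum_mul, law_w_sum G hs, one_mul]

lemma mul_supp {p q : Dst} {x : ℤ} (h : (p * q).coeff x ≠ 0) :
    ∃ z, q.coeff z ≠ 0 ∧ p.coeff (x - z) ≠ 0 := by
  rw [mul_as_mix, coeff_mix] at h
  obtain ⟨z, hz, h⟩ := Finset.exists_ne_zero_of_sum_ne_zero h
  have := right_ne_zero_of_mul h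
  rw [coeff_mul_pt] at this
  exact ⟨z, left_ne_zero_of_mul h, this⟩

/-- almost-orthogonal decomposition -/
lemma overlap (A J : Ω → ℤ) (hs : s.Nonempty) {Z : Dst} (hZ : IsP Z) (φ : ℤ → ℤ) (C : ℕ)
    (h : ∀ ω ∈ s, ∀ z, Z.coeff z ≠ 0 → φ (A ω + z) ≤ J ω ∧ J ω < φ (A ω + z) + C) :
    H (law s J) + ∑ j ∈ s.image J, (law s J).coeff j * H (law (cell s J j) A * Z) ≤
      H (law s A * Z) + log C := by
  have e : law s A * Z = ∑ j ∈ s.image J, (law s J).coeff j • (law (cell s J j) A * Z) := by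
    conv_lhs => rw [law_cond A J, Finset.sum_mul]
    simp
  rw [e, ← law_w_H J]
  refine H_mix_ge (fun j _ => law_w_nn J hs j) (law_w_sum J hs)
    (fun j hj => (IsP.law (cell_nonempty hj) A).mul hZ) C fun x => ?_
  have : ((s.image J).filter fun j => (law (cell s J j) A * Z).coeff x ≠ 0) ⊆
      Finset.Ico (φ x) (φ x + C) := by
    intro j hj
    obtain ⟨-, hj⟩ := Finset.mem_filter.1 hj
    obtain ⟨z, hz, hz'⟩ := mul_supp hj
    obtain ⟨ω, hω, hx⟩ := law_supp hz'
    obtain ⟨hω2, rfl⟩ := mem_cell.1 hω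
    have := h ω hω2 z hz
    rw [hx, sub_add_cancel] at this
    exact Finset.mem_Ico.2 this
  have := Finset.card_le_card this
  rw [Int.card_Ico] at this
  have h3 : (φ x + C - φ x).toNat = C := by simp
  rw [h3] at this
  exact_mod_cast this

end lawsec

end HE

namespace HE

open Real

lemma H_law_inj {Ω : Type*} {s : Finset Ω} (hs : s.Nonempty) {F : Ω → ℤ}
    (hF : ∀ x ∈ s, ∀ y ∈ s, F x = F y → x = y) : H (law s F) = log s.card := by
  have hc : (s.card : ℝ) ≠ 0 := by exact_mod_cast hs.card_pos.ne'
  rw [← law_w_H F, Finset.sum_image (fun x hx y hy h => hF x hx y hy h)]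
  have : ∀ ω ∈ s, negMulLog ((law s F).coeff (F ω)) = (s.card : ℝ)⁻¹ * log s.card := by
    intro ω hω
    rw [law_coeff]
    have : s.filter (fun x => F x = F ω) = {ω} := by
      ext x
      simp only [Finset.mem_filter, Finset.mem_singleton]
      exact ⟨fun h => hF x h.1 ω hω h.2, fun h => by subst h; exact ⟨hω, rfl⟩⟩
    rw [this]
    simp [negMulLog]
  rw [Finset.sum_congr rfl this]
  simp
  field_simp

/-- uniform measure on `{0, D, …, (2^l-1) D}`. -/
def P (D : ℤ) (l : ℕ) : Dst := law (Finset.range (2 ^ l)) fun i => D * (i : ℤ)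

lemma range_ne (l : ℕ) : (Finset.range (2 ^ l)).Nonempty := ⟨0, by simp⟩

lemma P_isP (D : ℤ) (l : ℕ) : IsP (P D l) := IsP.law (range_ne l) _

lemma P_zero (D : ℤ) : P D 0 = 1 := by
  rw [← pt_zero]; exact law_const (range_ne 0) fun i hi => by simp at hi; simp [hi]

lemma P_one (D : ℤ) : P D 1 = (1 / 2 : ℝ) • (pt 0 + pt D) := by
  simp [P, law, Finset.sum_range_succ]

lemma P_add (D : ℤ) (a b : ℕ) : P D (a + b) = P D a * P (D * 2 ^ a) b := by
  rw [P, P, P, law_mul, law, law]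
  symm
  refine Finset.sum_nbij' (fun x => x.1 + 2 ^ a * x.2) (fun n => (n % 2 ^ a, n / 2 ^ a)) ?_ ?_ ?_ ?_ ?_
  · rintro ⟨i, j⟩ h
    simp only [Finset.mem_product, Finset.mem_range] at h ⊢
    calc i + 2 ^ a * j < 2 ^ a * (j + 1) := by linarith
      _ ≤ 2 ^ a * 2 ^ b := Nat.mul_le_mul_left _ h.2
      _ = _ := (pow_add 2 a b).symm
  · intro n h
    simp only [Finset.mem_product, Finset.mem_range] at h ⊢
    refine ⟨Nat.mod_lt _ (by positivity), ?_⟩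
    rw [Nat.div_lt_iff_lt_mul (by positivity), mul_comm, ← pow_add]; exact h
  · rintro ⟨i, j⟩ h
    simp only [Finset.mem_product, Finset.mem_range] at h
    simp [Nat.add_mul_div_left, Nat.mod_eq_of_lt h.1, Nat.div_eq_of_lt h.1]
  · intro n h; exact Nat.mod_add_div n _
  · rintro ⟨i, j⟩ h
    simp only [Finset.card_product, Finset.card_range, pow_add]
    congr 2
    push_cast; ring

/-- uniform measure on `{0, …, 2^a - 1}` -/
def U (a : ℕ) : Dst := P 1 a

lemma U_isP (a : ℕ) : IsP (U a) := P_isP _ _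
lemma U_zero : U 0 = 1 := P_zero 1
lemma U_add (a b : ℕ) : U (a + b) = U a * P (2 ^ a) b := by
  rw [U, P_add, one_mul]; rfl

lemma H_U (a : ℕ) : H (U a) = a * log 2 := by
  rw [U, P, H_law_inj (range_ne a) (by intro x _ y _ h; simpa using h)]
  simp

/-- entropy increment by a two-point measure -/
def gg (q : Dst) (D : ℤ) : ℝ := H (q * P D 1) - H q

lemma gg_nonneg {q : Dst} (hq : IsP q) (D : ℤ) : 0 ≤ gg q D :=
  sub_nonneg.2 (H_le_mul hq (P_isP _ _))

lemma gg_double {q : Dst} (hq : IsP q) (D : ℤ) : gg q (D * 2) ≤ 4 * gg q D := by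
  have h1 := kv hq (P_isP D 1) 2
  have e : q * P D 1 ^ 2 = ∑ i ∈ (Finset.univ : Finset Bool), (1 / 2 : ℝ) •
      (if i then q * P (D * 2) 1 else q * pt D) := by
    simp only [Fintype.sum_bool, if_true, Bool.false_eq_true, if_false]
    rw [← smul_add, ← mul_add, ← mul_smul_comm]
    congr 1
    rw [P_one, P_one, sq, smul_mul_smul_comm, mul_two, pt_add, pt_zero, smul_add, ]
    have : (1 + pt D) * (1 + pt D) = (1 + pt D * pt D) + (2:ℝ) • pt D := by
      rw [two_smul]; ring
    rw [this]
    simp only [smul_add, smul_smul]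
    norm_num
  have h2 := H_concave (s := (Finset.univ : Finset Bool)) (w := fun _ => (1 / 2 : ℝ))
    (p := fun i => if i then q * P (D * 2) 1 else q * pt D) (by simp) (by simp) (by
      intro i _; split_ifs
      · exact hq.mul (P_isP _ _)
      · exact hq.mul_pt _)
  rw [← e] at h2
  simp [H_mul_pt] at h2
  simp only [gg]
  push_cast at h1
  linarith

lemma gg_pow {q : Dst} (hq : IsP q) (D : ℤ) (l : ℕ) : gg q (D * 2 ^ l) ≤ 4 ^ l * gg q D := by
  induction l with
  | zero => simp
  | succ l ih =>
    have := gg_double hq (D * 2 ^ l)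
    rw [pow_succ, ← mul_assoc]
    calc _ ≤ _ := this
      _ ≤ 4 * (4 ^ l * gg q D) := by gcongr
      _ = _ := by ring

lemma P_incr {q : Dst} (hq : IsP q) (D : ℤ) (l : ℕ) :
    H (q * P D l) - H q ≤ 4 ^ l * gg q D := by
  have : H (q * P D l) - H q ≤ (4 ^ l - 1) * gg q D := by
    induction l with
    | zero => simp [P_zero]
    | succ l ih =>
      have h1 := submod hq (P_isP (D * 2 ^ l) 1) (P_isP D l)
      have h2 := gg_pow hq D l
      have e : q * P (D * 2 ^ l) 1 * P D l = q * P D (l + 1) := by rw [P_add]; ring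
      rw [e] at h1
      have h3 := gg_nonneg hq D
      have h4 : (0:ℝ) ≤ 4 ^ l := by positivity
      have h5 : H (q * P (D * 2 ^ l) 1) - H q = gg q (D * 2 ^ l) := rfl
      rw [pow_succ]
      nlinarith [mul_nonneg h4 h3]
  have h3 := gg_nonneg hq D
  linarith

lemma H_UP_ge {b l : ℕ} {D : ℤ} (hD : 1 ≤ D) (hDb : D ≤ 2 ^ b) :
    log (2 ^ l * D) - log 2 ≤ H (U b * P D l) := by
  have hD0 : D.toNat ≠ 0 := by omega
  set a := Nat.log 2 D.toNat
  have h1 : 2 ^ a ≤ D.toNat := Nat.pow_log_le_self 2 hD0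
  have h2 : D.toNat < 2 ^ (a + 1) := Nat.lt_pow_succ_log_self (by norm_num) _
  have h1' : (2:ℤ) ^ a ≤ D := by
    have : ((2 ^ a : ℕ) : ℤ) ≤ D := by omega
    exact_mod_cast this
  have h2' : D < 2 * 2 ^ a := by
    have : D < ((2 ^ (a+1) : ℕ) : ℤ) := by omega
    push_cast [pow_succ'] at this
    exact this
  have hab : a ≤ b := by
    have : (2:ℤ) ^ a ≤ 2 ^ b := h1'.trans hDb
    exact (pow_le_pow_iff_right₀ (by norm_num)).1 this
  obtain ⟨c, rfl⟩ := Nat.exists_eq_add_of_le hab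
  have h3 : H (U a * P D l) = log (2 ^ a * 2 ^ l) := by
    rw [U, P, P, law_mul, H_law_inj ((range_ne a).product (range_ne l))]
    · simp
    · rintro ⟨i, j⟩ h ⟨i', j'⟩ h' e
      simp only [Finset.mem_product, Finset.mem_range, one_mul] at h h' e
      have hi : (i : ℤ) < 2 ^ a := by exact_mod_cast h.1
      have hi' : (i' : ℤ) < 2 ^ a := by exact_mod_cast h'.1
      have hj : (j : ℤ) = j' := by
        rcases lt_trichotomy (j : ℤ) j' with hh | hh | hh
        · nlinarith
        · exact hh
        · nlinarith
      rw [hj] at e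
      simp at e
      simp [e, Nat.cast_injective hj]
  rw [U_add, mul_assoc, mul_comm (P _ c), ← mul_assoc]
  refine le_trans ?_ (H_le_mul ((U_isP a).mul (P_isP D l)) (P_isP _ c))
  rw [h3, ← log_div (by positivity) (by norm_num)]
  have hDr : (1:ℝ) ≤ D := by exact_mod_cast hD
  refine log_le_log (by positivity) ?_
  have h2r : (D:ℝ) < 2 * 2 ^ a := by exact_mod_cast h2'
  have : (0:ℝ) < 2 ^ l := by positivity
  nlinarith

/-- support in `[0, M)` -/
def Sup (p : Dst) (M : ℤ) : Prop := ∀ x, p.coeff x ≠ 0 → 0 ≤ x ∧ x < M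

lemma Sup.mul {p q : Dst} {M N : ℤ} (hp : Sup p M) (hq : Sup q N) : Sup (p * q) (M + N) := by
  intro x hx
  obtain ⟨z, hz, hz'⟩ := mul_supp hx
  have := hp _ hz'; have := hq _ hz
  omega

lemma Sup.H_le {p : Dst} (hp : IsP p) {M : ℤ} (h : Sup p M) : H p ≤ log M := by
  have hM : 0 ≤ M := by
    by_contra hM
    have := one_eq hp (s := ∅) (by
      intro x hx; rw [Finsupp.mem_support_iff] at hx; have := h x hx; omega)
    simp at this
  refine (H_le_log_card hp (s := Finset.Ico 0 M) ?_).trans ?_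
  · intro x hx; rw [Finsupp.mem_support_iff] at hx; exact Finset.mem_Ico.2 (h x hx)
  · simp only [Int.card_Ico, sub_zero]
    have : ((M.toNat : ℕ) : ℝ) = M := by exact_mod_cast Int.toNat_of_nonneg hM
    rw [this]

lemma P_Sup {D : ℤ} (hD : 1 ≤ D) (l : ℕ) : Sup (P D l) (2 ^ l * D) := by
  intro x hx
  obtain ⟨i, hi, rfl⟩ := law_supp hx
  rw [Finset.mem_range] at hi
  have : (i : ℤ) < 2 ^ l := by exact_mod_cast hi
  constructor
  · positivity
  · nlinarith

lemma U_Sup (a : ℕ) : Sup (U a) (2 ^ a) := by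
  have := P_Sup (D := 1) le_rfl a; rwa [mul_one] at this

lemma step_bound {q : Dst} (hq : IsP q) {b b' l : ℕ} {D : ℤ} (hD : 1 ≤ D) (hDb : D ≤ 2 ^ b)
    (hbb : b ≤ b') (hl : 2 * 2 ^ b' ≤ 2 ^ l * D) :
    H (q * U b') - H (q * U b) ≤ log 4 + 4 ^ l * gg (q * U b) D := by
  have hUb := U_isP b
  have hUb' := U_isP b'
  have hP := P_isP D l
  have h1 : H (q * U b') ≤ H (q * U b' * (U b * P D l)) := H_le_mul (hq.mul hUb') (hUb.mul hP)
  have h2 := submod (hUb.mul hP) hUb' hq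
  have e1 : U b * P D l * U b' * q = q * U b' * (U b * P D l) := by ring
  have e2 : U b * P D l * q = q * U b * P D l := by ring
  rw [e1, e2] at h2
  have h3 := P_incr (hq.mul hUb) D l
  have h4 := Sup.H_le ((hUb.mul hP).mul hUb') (((U_Sup b).mul (P_Sup hD l)).mul (U_Sup b'))
  have h5 := H_UP_ge (l := l) hD hDb
  have hDr : (1:ℝ) ≤ D := by exact_mod_cast hD
  have h6 : log ((2 ^ b + 2 ^ l * D + 2 ^ b' : ℤ) : ℝ) ≤ log (2 * (2 ^ l * D)) := by
    refine log_le_log (by push_cast; positivity) ?_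
    have h7 : (2 ^ b : ℤ) ≤ 2 ^ b' := pow_le_pow_right₀ (by norm_num) hbb
    have : (2 ^ b + 2 ^ l * D + 2 ^ b' : ℤ) ≤ 2 * (2 ^ l * D) := by linarith
    exact_mod_cast this
  rw [log_mul (by norm_num) (by positivity)] at h6
  have h8 : log 4 = 2 * log 2 := by
    rw [show (4:ℝ) = 2 ^ 2 by norm_num, log_pow]; norm_num
  linarith

end HE

namespace HE

open Real

/-- iterated averaging operator -/
def Ait (s : Finset ℤ) (w : ℤ → ℝ) (Y : ℤ → Dst) (φ : Dst → ℝ) : ℕ → Dst → ℝ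
  | 0, q => φ q
  | k + 1, q => ∑ c ∈ s, w c * Ait s w Y φ k (q * Y c)

/-- entropy increment of a mixture -/
def gam (s : Finset ℤ) (w : ℤ → ℝ) (Y : ℤ → Dst) (q : Dst) : ℝ :=
  ∑ c ∈ s, w c * (H (q * Y c) - H q)

section ait

variable {s : Finset ℤ} {w : ℤ → ℝ} {Y : ℤ → Dst}

lemma Ait_mono (hw : ∀ c ∈ s, 0 ≤ w c) (hY : ∀ c ∈ s, IsP (Y c)) {φ ψ : Dst → ℝ}
    (h : ∀ q, IsP q → φ q ≤ ψ q) (k : ℕ) {q : Dst} (hq : IsP q) :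
    Ait s w Y φ k q ≤ Ait s w Y ψ k q := by
  induction k generalizing q with
  | zero => exact h q hq
  | succ k ih => exact Finset.sum_le_sum fun c hc =>
      mul_le_mul_of_nonneg_left (ih (hq.mul (hY c hc))) (hw c hc)

lemma Ait_lin (hw1 : ∑ c ∈ s, w c = 1) (a b : ℝ) (φ : Dst → ℝ) (k : ℕ) (q : Dst) :
    Ait s w Y (fun q => a + b * φ q) k q = a + b * Ait s w Y φ k q := by
  induction k generalizing q with
  | zero => rfl
  | succ k ih =>
    simp only [Ait, ih, mul_add, Finset.sum_add_distrib, ← Finset.sum_mul, hw1, one_mul,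
      Finset.mul_sum]
    congr 1
    exact Finset.sum_congr rfl fun c _ => by ring

lemma Ait_shift (r : Dst) (φ : Dst → ℝ) (k : ℕ) (q : Dst) :
    Ait s w Y (fun q => φ (q * r)) k q = Ait s w Y φ k (q * r) := by
  induction k generalizing q with
  | zero => rfl
  | succ k ih =>
    simp only [Ait, ih]
    exact Finset.sum_congr rfl fun c _ => by rw [mul_right_comm]

lemma Ait_H_succ (hw1 : ∑ c ∈ s, w c = 1) (k : ℕ) (q : Dst) :
    Ait s w Y H (k + 1) q - Ait s w Y H k q = Ait s w Y (gam s w Y) k q := by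
  induction k generalizing q with
  | zero =>
    simp only [Ait, gam, mul_sub, Finset.sum_sub_distrib, ← Finset.sum_mul, hw1, one_mul]
  | succ k ih =>
    rw [Ait, Ait, ← Finset.sum_sub_distrib]
    simp only [← mul_sub, ih]
    rfl

lemma Ait_gam_anti (hw : ∀ c ∈ s, 0 ≤ w c) (hw1 : ∑ c ∈ s, w c = 1)
    (hY : ∀ c ∈ s, IsP (Y c)) (k : ℕ) {q : Dst} (hq : IsP q) :
    Ait s w Y (gam s w Y) (k + 1) q ≤ Ait s w Y (gam s w Y) k q := by
  induction k generalizing q with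
  | zero =>
    simp only [Ait]
    calc _ ≤ ∑ c ∈ s, w c * gam s w Y q := by
          refine Finset.sum_le_sum fun c hc => mul_le_mul_of_nonneg_left ?_ (hw c hc)
          refine Finset.sum_le_sum fun c' hc' => mul_le_mul_of_nonneg_left ?_ (hw c' hc')
          have := submod hq (hY c' hc') (hY c hc)
          rwa [mul_right_comm] at this
      _ = _ := by rw [← Finset.sum_mul, hw1, one_mul]
  | succ k ih =>
    rw [Ait, Ait]
    exact Finset.sum_le_sum fun c hc =>
      mul_le_mul_of_nonneg_left (ih (hq.mul (hY c hc))) (hw c hc)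

lemma Ait_gam_le (hw : ∀ c ∈ s, 0 ≤ w c) (hw1 : ∑ c ∈ s, w c = 1)
    (hY : ∀ c ∈ s, IsP (Y c)) (k : ℕ) {q : Dst} (hq : IsP q) :
    k * Ait s w Y (gam s w Y) k q ≤ Ait s w Y H k q - H q := by
  induction k with
  | zero => simp [Ait]
  | succ k ih =>
    have h1 := Ait_gam_anti hw hw1 hY k hq
    have h2 := Ait_H_succ (Y := Y) hw1 k q
    push_cast
    have h3 : ((k:ℝ) + 1) * Ait s w Y (gam s w Y) (k + 1) q ≤
      ((k:ℝ) + 1) * Ait s w Y (gam s w Y) k q := mul_le_mul_of_nonneg_left h1 (by positivity)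
    linarith

lemma Ait_H_sup (hw : ∀ c ∈ s, 0 ≤ w c) (hw1 : ∑ c ∈ s, w c = 1)
    (hY : ∀ c ∈ s, IsP (Y c)) {R : ℤ} (hR : ∀ c ∈ s, Sup (Y c) R) (k : ℕ) {q : Dst} (hq : IsP q)
    {M : ℤ} (hM : Sup q M) : Ait s w Y H k q ≤ log ((M + k * R : ℤ)) := by
  induction k generalizing q M with
  | zero => simpa [Ait] using Sup.H_le hq hM
  | succ k ih =>
    rw [Ait]
    calc _ ≤ ∑ c ∈ s, w c * log ((M + (k + 1 : ℕ) * R : ℤ)) := by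
          refine Finset.sum_le_sum fun c hc => mul_le_mul_of_nonneg_left ?_ (hw c hc)
          have := ih (hq.mul (hY c hc)) (hM.mul (hR c hc))
          have e : M + ((k + 1 : ℕ) : ℤ) * R = M + R + k * R := by push_cast; ring
          rw [e]; exact this
      _ = _ := by rw [← Finset.sum_mul, hw1, one_mul]

end ait

lemma half_pair (a b : ℤ) : (1 / 2 : ℝ) • (pt a + pt b) = P |a - b| 1 * pt (min a b) := by
  rw [P_one, smul_mul_assoc, add_mul, ← pt_add, ← pt_add, zero_add]
  rcases le_total a b with h | h
  · rw [min_eq_left h, abs_of_nonpos (by linarith)]; congr 3; ring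
  · rw [min_eq_right h, abs_of_nonneg (by linarith), add_comm]; congr 3; ring

lemma pair_lower {Ω : Type*} {t : Finset Ω} (ht : t.Nonempty) (F : Ω → ℤ) {q : Dst} (hq : IsP q) :
    ∑ x ∈ t ×ˢ t, ((t ×ˢ t).card : ℝ)⁻¹ * gg q |F x.1 - F x.2| ≤ H (q * law t F) - H q := by
  have htt := ht.product ht
  have e : q * law t F = ∑ x ∈ t ×ˢ t, ((t ×ˢ t).card : ℝ)⁻¹ •
      (q * P |F x.1 - F x.2| 1 * pt (min (F x.1) (F x.2))) := by
    have : law t F = (1 / 2 : ℝ) • (law (t ×ˢ t) (fun x => F x.1) + law (t ×ˢ t) (fun x => F x.2)) := by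
      rw [law_fst F ht, law_snd F ht, ← two_smul ℝ (law t F), smul_smul]; norm_num
    conv_lhs => rw [this, law, law, ← Finset.sum_add_distrib, Finset.smul_sum, Finset.mul_sum]
    refine Finset.sum_congr rfl fun x _ => ?_
    rw [← smul_add, smul_comm, half_pair, mul_smul_comm, mul_assoc]
  have h := H_concave (s := t ×ˢ t) (w := fun _ => ((t ×ˢ t).card : ℝ)⁻¹)
    (p := fun x => q * P |F x.1 - F x.2| 1 * pt (min (F x.1) (F x.2)))
    (fun _ _ => by positivity) (card_mul_inv htt) (fun x _ => (hq.mul (P_isP _ _)).mul_pt _)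
  rw [← e] at h
  simp only [H_mul_pt] at h
  simp only [gg, mul_sub, Finset.sum_sub_distrib, ← Finset.sum_mul]
  rw [card_mul_inv htt]
  linarith

/-- proportion of far pairs -/
def far {Ω : Type*} (t : Finset Ω) (f : Ω → ℤ) : ℝ :=
  (((t ×ˢ t).filter fun x => 2 ≤ |f x.1 - f x.2|).card : ℝ) / (t ×ˢ t).card

lemma far_eq {Ω : Type*} (t : Finset Ω) (f : Ω → ℤ) (a : ℝ) :
    far t f * a = ∑ x ∈ t ×ˢ t, ((t ×ˢ t).card : ℝ)⁻¹ * (if 2 ≤ |f x.1 - f x.2| then a else 0) := by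
  rw [← Finset.mul_sum, ← Finset.sum_filter, Finset.sum_const, nsmul_eq_mul, far]
  ring

lemma far_entropy {Ω : Type*} {t : Finset Ω} (ht : t.Nonempty) (f : Ω → ℤ) (a : ℤ) (m : ℕ)
    (hf : ∀ ω ∈ t, a ≤ f ω ∧ f ω < a + 2 ^ m) :
    H (law t f) ≤ log 6 + far t f * (m * log 2) := by
  have hc : (t.card : ℝ) ≠ 0 := by exact_mod_cast ht.card_pos.ne'
  have key : ∀ ω' ∈ t, H (law t f) ≤
      ∑ ω ∈ t, (t.card : ℝ)⁻¹ * (log 6 + if 2 ≤ |f ω - f ω'| then (m * log 2) else 0) := by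
    intro ω' hω'
    set Q : ℤ → ℝ := fun x => if 2 ≤ |x - f ω'| then (2 * 2 ^ m)⁻¹ else 6⁻¹ with hQ
    have hg := gibbs (IsP.law ht f) (s := Finset.Ico a (a + 2 ^ m)) (by
      intro x hx
      rw [Finsupp.mem_support_iff] at hx
      obtain ⟨ω, h, rfl⟩ := law_supp hx
      exact Finset.mem_Ico.2 (hf ω h)) Q (by
        intro x _; simp only [hQ]; split_ifs <;> positivity) (by
        have hle : ∀ x ∈ Finset.Ico a (a + 2 ^ m), Q x ≤ (2 * 2 ^ m)⁻¹ +
            if x ∈ Finset.Icc (f ω' - 1) (f ω' + 1) then (6:ℝ)⁻¹ else 0 := by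
          intro x _
          simp only [hQ]
          split_ifs with h1 h2 h2
          · norm_num
          · norm_num
          · have : (0:ℝ) ≤ (2 * 2 ^ m)⁻¹ := by positivity
            linarith
          · exfalso; apply h2; rw [Finset.mem_Icc]
            rw [not_le, abs_lt] at h1
            omega
        refine (Finset.sum_le_sum hle).trans ?_
        rw [Finset.sum_add_distrib, Finset.sum_const, ← Finset.sum_filter, Finset.sum_const]
        have h3 : ((Finset.Ico a (a + 2 ^ m)).filter
            fun x => x ∈ Finset.Icc (f ω' - 1) (f ω' + 1)).card ≤ 3 := by
          refine (Finset.card_le_card (t := Finset.Icc (f ω' - 1) (f ω' + 1)) ?_).trans ?_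
          · intro x hx; exact (Finset.mem_filter.1 hx).2
          · rw [Int.card_Icc]; omega
        have h4 : (Finset.Ico a (a + 2 ^ m)).card = 2 ^ m := by
          rw [Int.card_Ico]; simp
          have : (2 ^ m : ℤ) = ((2 ^ m : ℕ) : ℤ) := by push_cast; rfl
          rw [this, Int.toNat_natCast]
        rw [h4, nsmul_eq_mul, nsmul_eq_mul]
        have h5 : (((Finset.Ico a (a + 2 ^ m)).filter
            fun x => x ∈ Finset.Icc (f ω' - 1) (f ω' + 1)).card : ℝ) ≤ 3 := by exact_mod_cast h3
        have h6 : ((2 ^ m : ℕ) : ℝ) * (2 * 2 ^ m)⁻¹ = 1 / 2 := by push_cast; field_simp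
        rw [h6]; linarith)
    refine hg.trans ?_
    have e : ∑ x ∈ Finset.Ico a (a + 2 ^ m), (law t f).coeff x * -log (Q x) =
        ∑ ω ∈ t, (t.card : ℝ)⁻¹ * -log (Q (f ω)) := by
      simp only [law, coeff_mix, Finset.sum_mul]
      rw [Finset.sum_comm]
      refine Finset.sum_congr rfl fun ω hω => ?_
      simp only [coeff_pt, mul_ite, mul_one, mul_zero, ite_mul, zero_mul]
      rw [Finset.sum_ite_eq, if_pos (Finset.mem_Ico.2 (hf ω hω))]
    rw [e]
    refine Finset.sum_le_sum fun ω _ => mul_le_mul_of_nonneg_left ?_ (by positivity)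
    have h26 : log 2 ≤ log 6 := log_le_log (by norm_num) (by norm_num)
    simp only [hQ]
    split_ifs
    · rw [log_inv, neg_neg, log_mul (by norm_num) (by positivity), log_pow]; linarith
    · rw [log_inv, neg_neg, add_zero]
  have h1 : ∑ ω' ∈ t, (t.card : ℝ)⁻¹ * H (law t f) = H (law t f) := by
    rw [← Finset.sum_mul, card_mul_inv ht, one_mul]
  have h0 : (0:ℝ) ≤ (t.card : ℝ)⁻¹ := by positivity
  have h2 := Finset.sum_le_sum fun ω' h => mul_le_mul_of_nonneg_left (key ω' h) h0
  rw [h1] at h2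
  refine h2.trans (le_of_eq ?_)
  rw [far_eq, Finset.sum_product_right]
  have e : ∀ ω' ∈ t, (t.card : ℝ)⁻¹ * ∑ ω ∈ t, (t.card : ℝ)⁻¹ *
      (log 6 + if 2 ≤ |f ω - f ω'| then (m * log 2) else 0) = (t.card : ℝ)⁻¹ * log 6 +
      ∑ ω ∈ t, ((t ×ˢ t).card : ℝ)⁻¹ * (if 2 ≤ |f ω - f ω'| then (m * log 2) else 0) := by
    intro ω' _
    rw [← Finset.mul_sum, Finset.sum_add_distrib, Finset.sum_const, nsmul_eq_mul,
      Finset.card_product, ← Finset.mul_sum]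
    push_cast
    rw [mul_inv]
    field_simp
  rw [Finset.sum_congr rfl e, Finset.sum_add_distrib, ← Finset.sum_mul, card_mul_inv ht, one_mul]

end HE

namespace HE

open Real

/-- scale-`b` entropy increment -/
def ff (m b : ℕ) (q : Dst) : ℝ := H (q * U ((b + 1) * m)) - H (q * U (b * m))

lemma U_step (m b : ℕ) : U ((b + 1) * m) = U (b * m) * P (2 ^ (b * m)) m := by
  rw [add_mul, one_mul, U_add]

lemma ff_mul_le {q r : Dst} (hq : IsP q) (hr : IsP r) (m b : ℕ) : ff m b (q * r) ≤ ff m b q := by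
  have := submod (hq.mul (U_isP (b * m))) (P_isP (2 ^ (b * m)) m) hr
  simp only [ff, U_step]
  convert this using 3 <;> ring

lemma ff_le (m b : ℕ) {q : Dst} (hq : IsP q) : ff m b q ≤ m * log 2 := by
  have h1 := ff_mul_le IsP.unit hq m b
  rw [one_mul] at h1
  refine h1.trans (le_of_eq ?_)
  simp only [ff, one_mul, H_U]; push_cast; ring

lemma ff_pt (m b : ℕ) (q : Dst) (a : ℤ) : ff m b (q * pt a) = ff m b q := by
  simp only [ff, mul_right_comm q (pt a), H_mul_pt]

lemma ff_mix (m b : ℕ) {s : Finset ℤ} {w : ℤ → ℝ} {Y : ℤ → Dst}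
    (hw : ∀ c ∈ s, 0 ≤ w c) (hY : ∀ c ∈ s, IsP (Y c)) {q : Dst} (hq : IsP q) :
    ff m b (q * ∑ c ∈ s, w c • Y c) ≤ ∑ c ∈ s, w c * ff m b (q * Y c) := by
  have h := data_proc (s := s) (w := w) (p := fun c => q * Y c * U (b * m))
    (r := P (2 ^ (b * m)) m) hw (fun c hc => (hq.mul (hY c hc)).mul (U_isP _)) (P_isP _ _)
  have e : ∑ c ∈ s, w c • (q * Y c * U (b * m)) = q * (∑ c ∈ s, w c • Y c) * U (b * m) := by
    rw [Finset.mul_sum, Finset.sum_mul]; simp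
  rw [e] at h
  simp only [ff, U_step, mul_sub, Finset.sum_sub_distrib, ← mul_assoc]
  linarith

/-- the exists-a-good-distance step -/
lemma exists_gg {Ω : Type*} {s : Finset Ω} (hs : s.Nonempty) (F : Ω → ℤ) {r R : ℤ} (hr : 0 < r)
    (hrR : r ≤ R) {q : Dst} (hq : IsP q) {c1 : ℝ}
    (hc : c1 ≤ ∑ c ∈ s.image (fun ω => F ω / R), (law s (fun ω => F ω / R)).coeff c *
      far (cell s (fun ω => F ω / R) c) (fun ω => F ω / r)) :
    ∃ D, r ≤ D ∧ D ≤ R ∧ c1 * gg q D ≤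
      gam (s.image (fun ω => F ω / R)) (fun c => (law s (fun ω => F ω / R)).coeff c)
        (fun c => law (cell s (fun ω => F ω / R) c) F) q := by
  obtain ⟨D, hD, hmin⟩ := Finset.exists_min_image (Finset.Icc r R) (gg q)
    ⟨r, Finset.mem_Icc.2 ⟨le_rfl, hrR⟩⟩
  rw [Finset.mem_Icc] at hD
  refine ⟨D, hD.1, hD.2, ?_⟩
  refine (mul_le_mul_of_nonneg_right hc (gg_nonneg hq D)).trans ?_
  rw [Finset.sum_mul, gam]
  refine Finset.sum_le_sum fun c hc => ?_
  rw [mul_assoc]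
  refine mul_le_mul_of_nonneg_left ?_ (law_w_nn _ hs c)
  refine le_trans ?_ (pair_lower (cell_nonempty hc) F hq)
  rw [far_eq]
  refine Finset.sum_le_sum fun x hx => mul_le_mul_of_nonneg_left ?_ (by positivity)
  obtain ⟨h1, h2⟩ := Finset.mem_product.1 hx
  replace h1 := (mem_cell.1 h1).2
  replace h2 := (mem_cell.1 h2).2
  split_ifs with h
  · refine hmin _ (Finset.mem_Icc.2 ?_)
    have a1 := Int.mul_ediv_add_emod (F x.1) R
    have a2 := Int.mul_ediv_add_emod (F x.2) R
    have a3 := Int.mul_ediv_add_emod (F x.1) r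
    have a4 := Int.mul_ediv_add_emod (F x.2) r
    have hR : 0 < R := by linarith
    have b1 := Int.emod_nonneg (F x.1) hR.ne'
    have b2 := Int.emod_nonneg (F x.2) hR.ne'
    have b3 := Int.emod_nonneg (F x.1) hr.ne'
    have b4 := Int.emod_nonneg (F x.2) hr.ne'
    have d1 := Int.emod_lt_of_pos (F x.1) hR
    have d2 := Int.emod_lt_of_pos (F x.2) hR
    have d3 := Int.emod_lt_of_pos (F x.1) hr
    have d4 := Int.emod_lt_of_pos (F x.2) hr
    rw [h1] at a1
    rw [h2] at a2
    constructor
    · rcases le_abs.1 h with h | h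
      · refine le_abs.2 (Or.inl ?_); nlinarith
      · refine le_abs.2 (Or.inr ?_); nlinarith
    · rw [abs_le]; constructor <;> linarith
  · exact gg_nonneg hq _

lemma far_total {Ω : Type*} {s : Finset Ω} (hs : s.Nonempty) (F : Ω → ℤ) (b m : ℕ) :
    H (law s fun ω => F ω / 2 ^ (b * m)) - H (law s fun ω => F ω / 2 ^ ((b + 1) * m)) ≤
      log 6 + (∑ c ∈ s.image (fun ω => F ω / 2 ^ ((b + 1) * m)),
        (law s (fun ω => F ω / 2 ^ ((b + 1) * m))).coeff c *
          far (cell s (fun ω => F ω / 2 ^ ((b + 1) * m)) c) (fun ω => F ω / 2 ^ (b * m))) *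
        (m * log 2) := by
  have h := H_law_le_cond (s := s) (fun ω => F ω / 2 ^ (b * m)) (fun ω => F ω / 2 ^ ((b + 1) * m)) hs
  rw [sub_le_iff_le_add']
  refine h.trans ?_
  gcongr
  have e : log 6 = ∑ c ∈ s.image (fun ω => F ω / 2 ^ ((b + 1) * m)),
        (law s (fun ω => F ω / 2 ^ ((b + 1) * m))).coeff c * log 6 := by
    rw [← Finset.sum_mul, law_w_sum _ hs, one_mul]
  rw [e, Finset.sum_mul, ← Finset.sum_add_distrib]
  refine Finset.sum_le_sum fun c hc => ?_
  rw [mul_assoc, ← mul_add]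
  refine mul_le_mul_of_nonneg_left ?_ (law_w_nn _ hs c)
  refine far_entropy (cell_nonempty hc) _ (2 ^ m * c) m fun ω hω => ?_
  have h1 := (mem_cell.1 hω).2
  have e2 : (2:ℤ) ^ ((b + 1) * m) = 2 ^ (b * m) * 2 ^ m := by rw [← pow_add]; ring_nf
  rw [e2, ← Int.ediv_ediv_of_nonneg (by positivity)] at h1
  have hm : (0:ℤ) < 2 ^ m := by positivity
  have a1 := Int.mul_ediv_add_emod (F ω / 2 ^ (b * m)) (2 ^ m)
  have b1 := Int.emod_nonneg (F ω / 2 ^ (b * m)) hm.ne'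
  have d1 := Int.emod_lt_of_pos (F ω / 2 ^ (b * m)) hm
  rw [h1] at a1
  constructor <;> linarith

lemma good_scale {Ω : Type*} {s : Finset Ω} (hs : s.Nonempty) (F : Ω → ℤ) (b m : ℕ) (hm : 1 ≤ m)
    {δ : ℝ} (hδ : 0 < δ) (hδm : 2 * log 6 ≤ δ * m)
    (h : δ * m ≤ H (law s fun ω => F ω / 2 ^ (b * m)) - H (law s fun ω => F ω / 2 ^ ((b + 1) * m)))
    (k : ℕ) (hk : 1 ≤ k) :
    ff m (b + 1) (law s F ^ k) ≤
      log 4 + 4 ^ (2 * m + 1) * (2 * log 2 / δ) * (log (k + 1) / k) := by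
  set R : ℤ := 2 ^ ((b + 1) * m) with hR
  set r : ℤ := 2 ^ (b * m) with hr
  have hR0 : 0 < R := by positivity
  have hr0 : 0 < r := by positivity
  have hrR : r ≤ R := pow_le_pow_right₀ (by norm_num) (by nlinarith)
  set G : Ω → ℤ := fun ω => F ω / R with hG
  set S := s.image G with hS
  set w : ℤ → ℝ := fun c => (law s G).coeff c with hwdef
  set Y : ℤ → Dst := fun c => law (cell s G c) F with hYdef
  set Y' : ℤ → Dst := fun c => Y c * pt (-(R * c)) with hY'def
  have hw : ∀ c ∈ S, 0 ≤ w c := fun c _ => law_w_nn G hs c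
  have hw1 : ∑ c ∈ S, w c = 1 := law_w_sum G hs
  have hY : ∀ c ∈ S, IsP (Y c) := fun c hc => IsP.law (cell_nonempty hc) F
  have hY' : ∀ c ∈ S, IsP (Y' c) := fun c hc => (hY c hc).mul_pt _
  have hL : 0 < log 2 := log_pos (by norm_num)
  have hm0 : (0:ℝ) < m := by exact_mod_cast hm
  set c1 : ℝ := δ / (2 * log 2) with hc1
  have hc1pos : 0 < c1 := by positivity
  have hfar : c1 ≤ ∑ c ∈ S, w c * far (cell s G c) (fun ω => F ω / r) := by
    have := h.trans (far_total hs F b m)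
    change δ * m ≤ log 6 + (∑ c ∈ S, w c * far (cell s G c) (fun ω => F ω / r)) * (m * log 2) at this
    rw [hc1, div_le_iff₀ (by positivity)]
    have h6 : δ * m / 2 ≤ (∑ c ∈ S, w c * far (cell s G c) (fun ω => F ω / r)) * log 2 * m := by
      linarith
    have : δ / 2 ≤ (∑ c ∈ S, w c * far (cell s G c) (fun ω => F ω / r)) * log 2 := by
      refine le_of_mul_le_mul_right ?_ hm0
      linarith
    linarith
  have hgam : ∀ q, gam S w Y q = gam S w Y' q := by
    intro q
    simp only [gam, hY'def, ← mul_assoc, H_mul_pt]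
  -- one step bound
  have hstep : ∀ q, IsP q → ff m (b + 1) q ≤
      log 4 + (4 ^ (2 * m + 1) / c1) * gam S w Y' (q * U ((b + 1) * m)) := by
    intro q hq
    obtain ⟨D, hD1, hD2, hD3⟩ := exists_gg hs F hr0 hrR (hq.mul (U_isP ((b + 1) * m))) hfar
    have h1 := step_bound hq (b := (b + 1) * m) (b' := (b + 1 + 1) * m) (l := 2 * m + 1) (D := D)
      (by linarith) hD2 (by nlinarith) (by
        have : (2:ℤ) * 2 ^ ((b + 1 + 1) * m) = 2 ^ (2 * m + 1) * r := by
          rw [hr, ← pow_add, ← pow_succ']; congr 1; ring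
        rw [this]
        exact mul_le_mul_of_nonneg_left hD1 (by positivity))
    refine h1.trans ?_
    rw [← hgam]
    have h2 : gg (q * U ((b + 1) * m)) D ≤ gam S w Y (q * U ((b + 1) * m)) / c1 := by
      rw [le_div_iff₀ hc1pos, mul_comm]; exact hD3
    have h3 : (0:ℝ) ≤ 4 ^ (2 * m + 1) := by positivity
    calc _ ≤ log 4 + 4 ^ (2 * m + 1) * (gam S w Y (q * U ((b + 1) * m)) / c1) := by gcongr
      _ = _ := by ring
  -- iteration
  have hiter : ∀ (k : ℕ) (q : Dst), IsP q →
      ff m (b + 1) (q * law s F ^ k) ≤ Ait S w Y' (ff m (b + 1)) k q := by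
    intro k
    induction k with
    | zero => intro q _; simp [Ait]
    | succ k ih =>
      intro q hq
      have hYY : law s F = ∑ c ∈ S, w c • Y c := law_cond F G
      have e : q * law s F ^ (k + 1) = (q * law s F ^ k) * ∑ c ∈ S, w c • Y c := by
        rw [← hYY]; ring
      rw [e]
      refine (ff_mix m (b + 1) hw hY (hq.mul ((IsP.law hs F).pow k))).trans ?_
      rw [Ait]
      refine Finset.sum_le_sum fun c hc => mul_le_mul_of_nonneg_left ?_ (hw c hc)
      have e2 : ff m (b + 1) (q * law s F ^ k * Y c) = ff m (b + 1) (q * Y' c * law s F ^ k) := by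
        rw [hY'def, ← ff_pt m (b + 1) (q * law s F ^ k * Y c) (-(R * c))]
        congr 1; ring
      rw [e2]
      exact ih _ (hq.mul (hY' c hc))
  have h1 := hiter k 1 IsP.unit
  rw [one_mul] at h1
  refine h1.trans ((Ait_mono hw hY' hstep k IsP.unit).trans ?_)
  rw [Ait_lin hw1, Ait_shift (U ((b + 1) * m)) (gam S w Y') k, one_mul]
  have hsup : ∀ c ∈ S, Sup (Y' c) R := by
    intro c hc x hx
    rw [hY'def, coeff_mul_pt] at hx
    obtain ⟨ω, hω, hx⟩ := law_supp hx
    have h1 : F ω / R = c := (mem_cell.1 hω).2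
    have a1 := Int.mul_ediv_add_emod (F ω) R
    have b1 := Int.emod_nonneg (F ω) hR0.ne'
    have d1 := Int.emod_lt_of_pos (F ω) hR0
    rw [h1] at a1
    constructor <;> linarith
  have h2 := Ait_gam_le hw hw1 hY' k (U_isP ((b + 1) * m))
  have h3 := Ait_H_sup hw hw1 hY' hsup k (U_isP ((b + 1) * m)) (U_Sup _)
  have h4 : log ((2 ^ ((b + 1) * m) + k * R : ℤ)) = log (k + 1) + H (U ((b + 1) * m)) := by
    rw [H_U, hR, ← log_pow, ← log_mul (by positivity) (by positivity)]
    push_cast; congr 1; ring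
  rw [h4] at h3
  have hk0 : (0:ℝ) < k := by exact_mod_cast hk
  have h5 : Ait S w Y' (gam S w Y') k (U ((b + 1) * m)) ≤ log (k + 1) / k := by
    rw [le_div_iff₀ hk0]; linarith
  have h6 : (4:ℝ) ^ (2 * m + 1) / c1 = 4 ^ (2 * m + 1) * (2 * log 2 / δ) := by
    rw [hc1]; field_simp
  rw [h6]
  gcongr

end HE

namespace HE

open Real

lemma exists_k (A c : ℝ) (hc : 0 < c) : ∃ k : ℕ, 1 ≤ k ∧ A * (log (k + 1) / k) ≤ c := by
  have h := Real.tendsto_pow_log_div_mul_add_atTop 1 (-1) 1 one_ne_zero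
  have h1 : Tendsto (fun k : ℕ => (k : ℝ) + 1) atTop atTop :=
    tendsto_atTop_add_const_right _ _ tendsto_natCast_atTop_atTop
  have h2 := ((h.comp h1).const_mul A)
  rw [mul_zero] at h2
  obtain ⟨k, hk1, hk2⟩ := ((h2.eventually (gt_mem_nhds hc)).and (eventually_ge_atTop 1)).exists
  refine ⟨k, hk2, ?_⟩
  simp at hk1
  exact hk1.le

lemma sum_ff (m B : ℕ) (q : Dst) : ∑ b ∈ Finset.range B, ff m b q = H (q * U (B * m)) - H q := by
  have := Finset.sum_range_sub (fun b => H (q * U (b * m))) B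
  simp only [ff]
  rw [this, zero_mul, U_zero, mul_one]

theorem core (δ g0 : ℝ) (hδ : 0 < δ) (hg0 : 0 < g0) :
    ∃ m0 : ℕ, ∀ m : ℕ, m0 ≤ m → 1 ≤ m ∧ ∃ k : ℕ, 1 ≤ k ∧ ∀ (Ω : Type) (s : Finset Ω) (F : Ω → ℤ) (B : ℕ)
      (Z : Dst) (β : ℝ), s.Nonempty → IsP Z → β ≤ log 2 - g0 →
      (∀ b < B, ff m b Z ≤ m * log 2 - β * m) → (∃ a, ∀ ω ∈ s, F ω / 2 ^ (B * m) = a) →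
      B * β * m + ((H (law s F) - δ * B * m) / (m * log 2) - 1) * (g0 * m / 2) - H Z ≤
        k * (H (Z * law s F) - H Z) := by
  have hL : 0 < log 2 := log_pos (by norm_num)
  have hL4 : log 4 = 2 * log 2 := by
    rw [show (4:ℝ) = 2 ^ 2 by norm_num, log_pow]; norm_num
  obtain ⟨m1, hm1⟩ := exists_nat_ge (2 * log 6 / δ)
  obtain ⟨m2, hm2⟩ := exists_nat_ge (6 * log 2 / g0)
  refine ⟨max (max m1 m2) 1, fun m hm => ?_⟩
  have hm1' : 2 * log 6 ≤ δ * m := by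
    rw [div_le_iff₀ hδ] at hm1
    have : (m1 : ℝ) ≤ m := by exact_mod_cast (le_max_left _ _).trans ((le_max_left _ _).trans hm)
    nlinarith
  have hm2' : 6 * log 2 ≤ g0 * m := by
    rw [div_le_iff₀ hg0] at hm2
    have : (m2 : ℝ) ≤ m := by exact_mod_cast (le_max_right _ _).trans ((le_max_left _ _).trans hm)
    nlinarith
  have hm3 : 1 ≤ m := (le_max_right _ _).trans hm
  have hm0 : (0:ℝ) < m := by exact_mod_cast hm3
  refine ⟨hm3, ?_⟩
  obtain ⟨k, hk1, hk2⟩ := exists_k (4 ^ (2 * m + 1) * (2 * log 2 / δ)) (log 2) hL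
  refine ⟨k, hk1, fun Ω s F B Z β hs hZ hβ hff hconst => ?_⟩
  set Y := law s F with hY
  have hYP : IsP Y := IsP.law hs F
  set W := Y ^ k with hW
  have hWP : IsP W := hYP.pow k
  refine le_trans ?_ (kv hZ hYP k)
  set h : ℕ → ℝ := fun b => H (law s fun ω => F ω / 2 ^ (b * m)) with hh
  set ind : ℕ → ℝ := fun b => if δ * m ≤ h b - h (b + 1) then 1 else 0 with hind
  have ind1 : ∀ b, ind b ≤ 1 := by intro b; simp only [hind]; split_ifs <;> norm_num
  -- lower bound for entropy
  have hlow : B * (m * log 2) - ∑ b ∈ Finset.range B, ff m b (Z * W) ≤ H (Z * W) := by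
    rw [sum_ff]
    have := H_le_mul' (U_isP (B * m)) (hZ.mul hWP)
    rw [H_U] at this
    push_cast at this
    linarith
  have hf0 : ∀ b < B, ff m b (Z * W) ≤ m * log 2 - β * m := fun b hb =>
    (ff_mul_le hZ hWP m b).trans (hff b hb)
  have hf1 : ∀ b, b + 1 < B → ff m (b + 1) (Z * W) ≤ m * log 2 - β * m - ind b * (g0 * m / 2) := by
    intro b hb
    by_cases hg : δ * m ≤ h b - h (b + 1)
    · have h1 := good_scale hs F b m hm3 hδ hm1' hg k hk1
      have h2 : ff m (b + 1) (Z * W) ≤ ff m (b + 1) W := by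
        rw [mul_comm]; exact ff_mul_le hWP hZ m (b + 1)
      have h3 : ind b = 1 := by simp only [hind]; rw [if_pos hg]
      have h4 : β * m ≤ (log 2 - g0) * m := mul_le_mul_of_nonneg_right hβ hm0.le
      rw [h3]
      linarith
    · have h3 : ind b = 0 := by simp only [hind]; rw [if_neg hg]
      rw [h3, zero_mul, sub_zero]
      exact hf0 _ hb
  have hhb : ∀ b, h b - h (b + 1) ≤ δ * m + m * log 2 * ind b := by
    intro b
    by_cases hg : δ * m ≤ h b - h (b + 1)
    · have h3 : ind b = 1 := by simp only [hind]; rw [if_pos hg]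
      rw [h3, mul_one]
      have hwin := window (s := s) (fun ω => F ω / 2 ^ (b * m)) (fun ω => F ω / 2 ^ ((b + 1) * m)) hs
        (fun j => 2 ^ m * j) (2 ^ m) (by
          intro ω _
          have e2 : (2:ℤ) ^ ((b + 1) * m) = 2 ^ (b * m) * 2 ^ m := by rw [← pow_add]; ring_nf
          rw [e2, ← Int.ediv_ediv_of_nonneg (by positivity)]
          exact Int.mul_ediv_self_le (by positivity)) (by
          intro ω _
          have e2 : (2:ℤ) ^ ((b + 1) * m) = 2 ^ (b * m) * 2 ^ m := by rw [← pow_add]; ring_nf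
          rw [e2, ← Int.ediv_ediv_of_nonneg (by positivity)]
          push_cast
          exact Int.lt_mul_ediv_self_add (by positivity))
      push_cast at hwin
      rw [log_pow] at hwin
      have : 0 < δ * m := by positivity
      simp only [hh]
      linarith
    · have h3 : ind b = 0 := by simp only [hind]; rw [if_neg hg]
      rw [h3, mul_zero, add_zero]
      exact (not_le.1 hg).le
  have hHY : H Y ≤ B * (δ * m) + m * log 2 * ∑ b ∈ Finset.range B, ind b := by
    have h1 : ∑ b ∈ Finset.range B, (h b - h (b + 1)) = H Y := by
      rw [Finset.sum_range_sub']
      obtain ⟨a, ha⟩ := hconst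
      have e1 : h B = 0 := by simp only [hh]; rw [law_const hs ha, H_pt]
      have e2 : h 0 = H Y := by simp [hh, hY]
      rw [e1, e2, sub_zero]
    rw [← h1]
    refine (Finset.sum_le_sum fun b _ => hhb b).trans (le_of_eq ?_)
    rw [Finset.sum_add_distrib, Finset.sum_const, Finset.mul_sum]; simp
  have hgm : 0 < g0 * m / 2 := by positivity
  have hmL : 0 < m * log 2 := by positivity
  have hcount : (H Y - δ * B * m) / (m * log 2) ≤ ∑ b ∈ Finset.range B, ind b := by
    rw [div_le_iff₀ hmL]; linarith
  have hfin : ∑ b ∈ Finset.range B, ff m b (Z * W) ≤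
      B * (m * log 2 - β * m) - (∑ b ∈ Finset.range B, ind b - 1) * (g0 * m / 2) := by
    cases B with
    | zero => simp; linarith
    | succ B =>
      rw [Finset.sum_range_succ']
      have h1 := Finset.sum_le_sum fun b hb => hf1 b (Nat.succ_lt_succ (Finset.mem_range.1 hb))
      rw [Finset.sum_sub_distrib, ← Finset.sum_mul] at h1
      simp only [Finset.sum_const, Finset.card_range, nsmul_eq_mul] at h1
      have h2 := hf0 0 (Nat.succ_pos B)
      have h3 : (∑ b ∈ Finset.range (B + 1), ind b - 1) * (g0 * m / 2) ≤
          (∑ b ∈ Finset.range B, ind b) * (g0 * m / 2) := by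
        refine mul_le_mul_of_nonneg_right ?_ hgm.le
        rw [Finset.sum_range_succ]; linarith [ind1 B]
      push_cast
      linarith
  have h9 : ((H Y - δ * B * m) / (m * log 2) - 1) * (g0 * m / 2) ≤
      (∑ b ∈ Finset.range B, ind b - 1) * (g0 * m / 2) :=
    mul_le_mul_of_nonneg_right (by linarith) hgm.le
  linarith

end HE

namespace HE

open Real

section hom

variable {ι : Type} [Fintype ι] [Nonempty ι]

/-- points of the homogeneous self-similar set, contraction `1/y`. -/
def X (y : ℝ) (t : ι → ℝ) (n : ℕ) (ω : Fin n → ι) : ℝ := ∑ k : Fin n, (y ^ (k : ℕ))⁻¹ * t (ω k)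

/-- discretization at scale `y^-(n+m)` -/
def AA (y : ℝ) (t : ι → ℝ) (n m : ℕ) (ω : Fin n → ι) : ℤ := ⌊X y t n ω * y ^ (n + m)⌋

/-- law of the discretization at scale `y^-n` -/
def ZZ (y : ℝ) (t : ι → ℝ) (n : ℕ) : Dst := law (Finset.univ : Finset (Fin n → ι)) (AA y t n 0)

/-- law of `AA` -/
def LA (y : ℝ) (t : ι → ℝ) (n m : ℕ) : Dst := law (Finset.univ : Finset (Fin n → ι)) (AA y t n m)

/-- entropy -/
def EE (y : ℝ) (t : ι → ℝ) (n : ℕ) : ℝ := H (ZZ y t n)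

variable {y : ℝ} {t : ι → ℝ}

lemma ZZ_isP (n : ℕ) : IsP (ZZ y t n) := IsP.law Finset.univ_nonempty _
lemma LA_isP (n m : ℕ) : IsP (LA y t n m) := IsP.law Finset.univ_nonempty _

lemma X_append (hy : 1 < y) (n m : ℕ) (a : Fin n → ι) (b : Fin m → ι) :
    X y t (n + m) (Fin.append a b) = X y t n a + (y ^ n)⁻¹ * X y t m b := by
  simp only [X, Fin.sum_univ_add, Fin.append_left, Fin.append_right, Fin.val_castAdd,
    Fin.val_natAdd, Finset.mul_sum, pow_add, mul_inv, mul_assoc]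

lemma exists_T (hy : 1 < y) (t : ι → ℝ) : ∃ T : ℕ, ∀ n (ω : Fin n → ι), |X y t n ω| ≤ T := by
  obtain ⟨τ, hτ⟩ : ∃ τ, ∀ i, |t i| ≤ τ := by
    obtain ⟨i, hi⟩ := Finite.exists_max (fun i => |t i|)
    exact ⟨_, hi⟩
  have hy0 : 0 < y := by linarith
  have hτ0 : 0 ≤ τ := (abs_nonneg _).trans (hτ (Classical.arbitrary ι))
  have hsum : Summable fun n : ℕ => (y⁻¹) ^ n :=
    summable_geometric_of_lt_one (by positivity) (inv_lt_one_of_one_lt₀ hy)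
  obtain ⟨T, hT⟩ := exists_nat_ge ((∑' n : ℕ, (y⁻¹) ^ n) * τ)
  refine ⟨T, fun n ω => le_trans ?_ hT⟩
  calc |X y t n ω| ≤ ∑ k : Fin n, |(y ^ (k : ℕ))⁻¹ * t (ω k)| := Finset.abs_sum_le_sum_abs _ _
    _ ≤ ∑ k : Fin n, (y⁻¹) ^ (k : ℕ) * τ := by
        refine Finset.sum_le_sum fun k _ => ?_
        rw [abs_mul, abs_of_nonneg (by positivity), inv_pow]
        gcongr
        exact hτ _
    _ = (∑ k ∈ Finset.range n, (y⁻¹) ^ k) * τ := by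
        rw [← Finset.sum_mul, Finset.sum_range]
    _ ≤ _ := by
        gcongr
        exact hsum.sum_le_tsum _ fun _ _ => by positivity

lemma AA_append (hy : 1 < y) (n m : ℕ) (a : Fin n → ι) (b : Fin m → ι) :
    AA y t n m a + AA y t m 0 b ≤ AA y t (n + m) 0 (Fin.append a b) ∧
    AA y t (n + m) 0 (Fin.append a b) ≤ AA y t n m a + AA y t m 0 b + 1 := by
  have hy0 : 0 < y := by linarith
  have e : X y t (n + m) (Fin.append a b) * y ^ (n + m + 0) =
      X y t n a * y ^ (n + m) + X y t m b * y ^ (m + 0) := by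
    rw [X_append hy, add_zero, add_zero, pow_add]; field_simp
  simp only [AA, e]
  have h2 := Int.le_floor_add_floor (X y t n a * y ^ (n + m)) (X y t m b * y ^ (m + 0))
  exact ⟨Int.le_floor_add _ _, by omega⟩

lemma ZZ_split (hy : 1 < y) (n m a : ℕ) :
    H (ZZ y t (n + m) * U a) ≤ H (LA y t n m * ZZ y t m * U a) + log 2 ∧
    H (LA y t n m * ZZ y t m * U a) ≤ H (ZZ y t (n + m) * U a) + log 2 := by
  have e1 : ZZ y t (n + m) = law ((Finset.univ : Finset (Fin n → ι)) ×ˢ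
      (Finset.univ : Finset (Fin m → ι)))
      (fun x => AA y t (n + m) 0 (Fin.append x.1 x.2)) := by
    rw [ZZ, law_equiv (Fin.appendEquiv n m), Finset.univ_product_univ]; rfl
  have e2 : LA y t n m * ZZ y t m = law ((Finset.univ : Finset (Fin n → ι)) ×ˢ
      (Finset.univ : Finset (Fin m → ι))) (fun x => AA y t n m x.1 + AA y t m 0 x.2) := by
    rw [LA, ZZ, law_mul]
  rw [e1, e2, U, P, law_mul, law_mul]
  have hne : (((Finset.univ : Finset (Fin n → ι)) ×ˢ (Finset.univ : Finset (Fin m → ι))) ×ˢ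
      Finset.range (2 ^ a)).Nonempty :=
    (Finset.univ_nonempty.product Finset.univ_nonempty).product (range_ne a)
  constructor
  · refine window _ _ hne (fun j => j) 2 ?_ ?_
    · rintro ⟨⟨x, z⟩, i⟩ _
      have := AA_append (t := t) hy n m x z
      dsimp only; omega
    · rintro ⟨⟨x, z⟩, i⟩ _
      have := AA_append (t := t) hy n m x z
      dsimp only; omega
  · refine window _ _ hne (fun j => j - 1) 2 ?_ ?_
    · rintro ⟨⟨x, z⟩, i⟩ _
      have := AA_append (t := t) hy n m x z
      dsimp only; omega
    · rintro ⟨⟨x, z⟩, i⟩ _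
      have := AA_append (t := t) hy n m x z
      dsimp only; omega

lemma AA_abs (hy : 1 < y) {T : ℕ} (hT : ∀ n (ω : Fin n → ι), |X y t n ω| ≤ T) (n : ℕ)
    (ω : Fin n → ι) : |(AA y t n 0 ω : ℝ)| ≤ T * y ^ n + 1 := by
  have hy0 : 0 < y := by linarith
  have h := hT n ω
  rw [abs_le] at h ⊢
  have hp : 0 < y ^ n := by positivity
  have h1 := Int.floor_le (X y t n ω * y ^ (n + 0))
  have h2 := Int.lt_floor_add_one (X y t n ω * y ^ (n + 0))
  simp only [AA]
  rw [add_zero] at h1 h2 ⊢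
  constructor <;> nlinarith

lemma ZZ_overlap (hy : 1 < y) {T : ℕ} (hT : ∀ n (ω : Fin n → ι), |X y t n ω| ≤ T) (n m a : ℕ)
    (K : ℕ) (hK : (2:ℝ) ^ a ≤ (K - T - 2) * y ^ m) :
    EE y t n + H (ZZ y t m * U a) ≤ H (LA y t n m * ZZ y t m * U a) + log ((2 * K + 3 : ℕ)) := by
  have hy0 : 0 < y := by linarith
  have hp : 0 < y ^ m := by positivity
  have h1p : 1 ≤ y ^ m := one_le_pow₀ hy.le
  have hP : IsP (ZZ y t m * U a) := (ZZ_isP m).mul (U_isP a)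
  have h := overlap (s := (Finset.univ : Finset (Fin n → ι))) (AA y t n m) (AA y t n 0)
    Finset.univ_nonempty hP (fun x => ⌊(x : ℝ) / y ^ m⌋ - K - 1) (2 * K + 3) (by
      intro ω _ z hz
      obtain ⟨u, hu, hz'⟩ := mul_supp hz
      obtain ⟨hu0, hu1⟩ := U_Sup a u hu
      obtain ⟨ω', _, hω'⟩ := law_supp hz'
      have hz2 := AA_abs hy hT m ω'
      rw [hω'] at hz2
      have hu1' : (u:ℝ) < 2 ^ a := by exact_mod_cast hu1
      have hu0' : (0:ℝ) ≤ u := by exact_mod_cast hu0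
      push_cast at hz2
      rw [abs_le] at hz2
      have f1 : (AA y t n m ω : ℝ) ≤ X y t n ω * y ^ (n + m) := Int.floor_le _
      have f2 : X y t n ω * y ^ (n + m) < AA y t n m ω + 1 := Int.lt_floor_add_one _
      have f3 : (AA y t n 0 ω : ℝ) ≤ X y t n ω * y ^ (n + 0) := Int.floor_le _
      have f4 : X y t n ω * y ^ (n + 0) < AA y t n 0 ω + 1 := Int.lt_floor_add_one _
      rw [pow_add, ← mul_assoc] at f1 f2
      rw [add_zero] at f3 f4
      set v := X y t n ω * y ^ n with hv
      set q := ((AA y t n m ω + z : ℤ) : ℝ) / y ^ m with hq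
      have hqe : q * y ^ m = AA y t n m ω + z := by rw [hq]; push_cast; field_simp
      have g1 := Int.floor_le q
      have g2 := Int.lt_floor_add_one q
      have k1 : v - K ≤ q := by
        refine le_of_mul_le_mul_right ?_ hp; nlinarith
      have k2 : q ≤ v + K := by
        refine le_of_mul_le_mul_right ?_ hp; nlinarith
      constructor
      · have : (⌊q⌋ : ℝ) < AA y t n 0 ω + K + 2 := by linarith
        have : ⌊q⌋ < AA y t n 0 ω + K + 2 := by exact_mod_cast this
        change ⌊q⌋ - K - 1 ≤ _
        omega
      · have : (AA y t n 0 ω : ℝ) < ⌊q⌋ + 1 + K := by linarith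
        have : AA y t n 0 ω < ⌊q⌋ + 1 + K := by exact_mod_cast this
        change _ < ⌊q⌋ - K - 1 + ((2 * K + 3 : ℕ) : ℤ)
        push_cast
        omega)
  have h2 : H (ZZ y t m * U a) ≤ ∑ j ∈ Finset.univ.image (AA y t n 0),
      (law (Finset.univ : Finset (Fin n → ι)) (AA y t n 0)).coeff j *
        H (law (cell (Finset.univ : Finset (Fin n → ι)) (AA y t n 0) j) (AA y t n m) *
          (ZZ y t m * U a)) := by
    calc _ = ∑ j ∈ Finset.univ.image (AA y t n 0),
      (law (Finset.univ : Finset (Fin n → ι)) (AA y t n 0)).coeff j * H (ZZ y t m * U a) := by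
          rw [← Finset.sum_mul, law_w_sum _ Finset.univ_nonempty, one_mul]
      _ ≤ _ := Finset.sum_le_sum fun j hj => mul_le_mul_of_nonneg_left
          (H_le_mul' hP (IsP.law (cell_nonempty hj) _)) (law_w_nn _ Finset.univ_nonempty j)
  rw [← mul_assoc] at h
  simp only [EE]
  change H (ZZ y t n) + _ ≤ H (LA y t n m * ZZ y t m * U a) + _ at h
  linarith

lemma EE_super (hy : 1 < y) (t : ι → ℝ) : ∃ C : ℝ, 0 ≤ C ∧ ∀ n m, EE y t n + EE y t m ≤ EE y t (n + m) + C := by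
  obtain ⟨T, hT⟩ := exists_T hy t
  refine ⟨log ((2 * (T + 3) + 3 : ℕ)) + log 2, by
    refine add_nonneg (log_natCast_nonneg _) (log_nonneg (by norm_num)), fun n m => ?_⟩
  have h1 := ZZ_overlap hy hT n m 0 (T + 3) (by
    have := one_le_pow₀ (n := m) hy.le
    push_cast; linarith)
  have h2 := (ZZ_split (t := t) hy n m 0).2
  rw [U_zero, mul_one, mul_one] at h1 h2
  simp only [EE] at *
  linarith

lemma EE_le (n : ℕ) : EE y t n ≤ n * log (Fintype.card ι) := by
  refine (H_le_log_card (ZZ_isP n) (law_supp_image _)).trans ?_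
  rw [← log_pow]
  have h1 : (Finset.univ.image (AA y t n 0)).card ≤ Fintype.card ι ^ n := by
    refine Finset.card_image_le.trans ?_
    simp
  have h2 : 0 < (Finset.univ.image (AA y t n 0)).card :=
    Finset.card_pos.2 (Finset.univ_nonempty.image _)
  refine log_le_log (by exact_mod_cast h2) (by exact_mod_cast h1)

lemma exists_alpha (hy : 1 < y) (t : ι → ℝ) : ∃ α C : ℝ, 0 ≤ C ∧
    Tendsto (fun n : ℕ => EE y t n / n) atTop (𝓝 α) ∧ (∀ n, EE y t n ≤ α * n + C) ∧
    α ≤ log (Fintype.card ι) := by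
  obtain ⟨C, hC0, hC⟩ := EE_super hy t
  have hsub : Subadditive fun n => C - EE y t n := by
    intro m n; have := hC m n; dsimp only; linarith
  have hlog : 0 ≤ log (Fintype.card ι) := log_natCast_nonneg _
  have hb : BddBelow (Set.range fun n : ℕ => (C - EE y t n) / n) := by
    refine ⟨-log (Fintype.card ι), ?_⟩
    rintro _ ⟨n, rfl⟩
    dsimp only
    rcases Nat.eq_zero_or_pos n with rfl | hn
    · simp [hlog]
    have hn : (0:ℝ) < n := by exact_mod_cast hn
    rw [le_div_iff₀ hn]
    have := EE_le (y := y) (t := t) n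
    linarith
  have hlim := hsub.tendsto_lim hb
  have h0 : Tendsto (fun n : ℕ => C / (n : ℝ)) atTop (𝓝 0) := tendsto_const_div_atTop_nhds_zero_nat C
  have hT : Tendsto (fun n : ℕ => EE y t n / n) atTop (𝓝 (-hsub.lim)) := by
    have := h0.sub hlim
    rw [zero_sub] at this
    refine this.congr fun n => ?_
    ring
  refine ⟨-hsub.lim, C, hC0, hT, ?_, ?_⟩
  · intro n
    rcases Nat.eq_zero_or_pos n with rfl | hn
    · have := EE_le (y := y) (t := t) 0
      simp at this ⊢; linarith
    have h1 := hsub.lim_le_div hb hn.ne'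
    have hn : (0:ℝ) < n := by exact_mod_cast hn
    rw [le_div_iff₀ hn] at h1
    linarith
  · refine le_of_tendsto hT ?_
    filter_upwards [eventually_ge_atTop 1] with n hn
    have hn : (0:ℝ) < n := by exact_mod_cast hn
    rw [div_le_iff₀ hn, mul_comm]; exact EE_le n

end hom

end HE

namespace HE

open Real

section hom

variable {ι : Type} [Fintype ι] [Nonempty ι]
variable {y : ℝ} {t : ι → ℝ}

lemma ZZ_upper (hy : 1 < y) {T : ℕ} (hT : ∀ n (ω : Fin n → ι), |X y t n ω| ≤ T) (i a : ℕ)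
    (h : y ^ i ≤ 2 ^ a) : H (ZZ y t i * U a) ≤ a * log 2 + log (2 * T + 4) := by
  have hy0 : 0 < y := by linarith
  have hs : Sup (ZZ y t i * pt (T * 2 ^ a + 1)) (2 * T * 2 ^ a + 3) := by
    intro x hx
    rw [coeff_mul_pt] at hx
    obtain ⟨ω, _, hω⟩ := law_supp hx
    have h1 := AA_abs hy hT i ω
    rw [hω, abs_le] at h1
    push_cast at h1
    have h2 : (T:ℝ) * y ^ i ≤ T * 2 ^ a := by gcongr
    have h3 : (0:ℝ) ≤ x := by linarith
    have h4 : (x:ℝ) < 2 * T * 2 ^ a + 3 := by linarith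
    exact ⟨by exact_mod_cast h3, by exact_mod_cast h4⟩
  have h1 := Sup.H_le (((ZZ_isP (y := y) (t := t) i).mul_pt _).mul (U_isP a)) (hs.mul (U_Sup a))
  rw [mul_right_comm, H_mul_pt] at h1
  refine h1.trans ?_
  rw [← log_pow, ← log_mul (by positivity) (by positivity)]
  have : (1:ℝ) ≤ 2 ^ a := one_le_pow₀ (by norm_num)
  refine log_le_log (by push_cast; positivity) ?_
  push_cast
  nlinarith

lemma ff_ZZ (hy : 1 < y) (t : ι → ℝ) : ∃ C1 : ℝ, ∀ m p b N : ℕ, y ^ p ≤ 2 ^ m → (2:ℝ) ^ ((b + 1) * m) ≤ y ^ N →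
    ff m b (ZZ y t N) ≤ m * log 2 - EE y t p + C1 := by
  obtain ⟨T, hT⟩ := exists_T hy t
  obtain ⟨Y, hY⟩ := exists_nat_ge y
  have hy0 : 0 < y := by linarith
  refine ⟨log (2 * T + 4) + log ((2 * (T + 2 + Y) + 3 : ℕ)) + 3 * log 2, fun m p b N hp hN => ?_⟩
  obtain ⟨i, hi1, hi2⟩ := exists_nat_pow_near (x := (2:ℝ) ^ ((b + 1) * m)) (y := y)
    (one_le_pow₀ (by norm_num)) hy
  have hiN : i ≤ N := (pow_le_pow_iff_right₀ hy).1 (hi1.trans hN)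
  have hpi : p ≤ i := by
    have h1 : (2:ℝ) ^ m ≤ 2 ^ ((b + 1) * m) := pow_le_pow_right₀ (by norm_num) (by nlinarith)
    have := (pow_lt_pow_iff_right₀ hy).1 ((hp.trans h1).trans_lt hi2)
    omega
  obtain ⟨j, rfl⟩ := Nat.exists_eq_add_of_le' hiN
  obtain ⟨l, hl⟩ := Nat.exists_eq_add_of_le hpi
  -- reduce to `ZZ i`
  have h1 := (ZZ_split (t := t) hy j i ((b + 1) * m)).1
  have h2 := (ZZ_split (t := t) hy j i (b * m)).2
  have h3 := ff_mul_le (ZZ_isP (y := y) (t := t) i) (LA_isP (y := y) (t := t) j i) m b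
  rw [mul_comm] at h3
  have h4 := ZZ_upper hy hT i ((b + 1) * m) hi1
  have h5 := (ZZ_split (t := t) hy p l (b * m)).2
  rw [← hl] at h5
  have h6 := ZZ_overlap hy hT p l (b * m) (T + 2 + Y) (by
    push_cast
    have e1 : (2:ℝ) ^ ((b + 1) * m) = 2 ^ (b * m) * 2 ^ m := by rw [← pow_add]; ring_nf
    rw [e1, hl, pow_succ, pow_add] at hi2
    have h2m : (0:ℝ) < 2 ^ m := by positivity
    have h7 : (2:ℝ) ^ (b * m) * 2 ^ m ≤ (y ^ l * y) * 2 ^ m := by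
      have : y ^ p * y ^ l * y ≤ 2 ^ m * (y ^ l * y) := by
        rw [mul_assoc]; gcongr
      linarith
    have h8 := le_of_mul_le_mul_right h7 h2m
    have h9 : y ^ l * y ≤ y ^ l * Y := by gcongr
    calc _ ≤ _ := h8
      _ ≤ _ := h9
      _ = _ := by ring)
  have h7 : H (U (b * m)) ≤ H (ZZ y t l * U (b * m)) := H_le_mul' (U_isP _) (ZZ_isP _)
  rw [H_U] at h7
  simp only [ff] at *
  push_cast at h4 h7
  linarith

end hom

end HE

namespace HE

open Real

section hom

variable {ι : Type} [Fintype ι] [Nonempty ι]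
variable {y : ℝ} {t : ι → ℝ}

lemma mul_supp_abs {R a z : ℤ} (hR : 0 < R) {K : ℕ} (hz : |z| ≤ K * R) :
    (a + z) / R - K - 1 ≤ a / R ∧ a / R < (a + z) / R - K - 1 + ((2 * K + 3 : ℕ) : ℤ) := by
  rw [abs_le] at hz
  have h1 : (a + z) / R ≤ a / R + K := by
    rw [← Int.add_mul_ediv_right _ _ hR.ne']
    exact Int.ediv_le_ediv hR (by linarith)
  have h2 : a / R ≤ (a + z) / R + K := by
    rw [← Int.add_mul_ediv_right _ _ hR.ne']
    exact Int.ediv_le_ediv hR (by linarith)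
  push_cast
  constructor <;> linarith

lemma AA_div (n N1 R : ℕ) (hR : 0 < R) (ω : Fin n → ι) :
    AA y t n N1 ω / (R : ℤ) = ⌊X y t n ω * y ^ n * (y ^ N1 / R)⌋ := by
  rw [AA, ← Int.floor_div_natCast]
  congr 1
  rw [pow_add]
  ring

lemma HJ (hy : 1 < y) (n N1 R M : ℕ) (hR : 0 < R) (h1 : (R:ℝ) ≤ y ^ N1) (h2 : y ^ N1 ≤ R * M) :
    EE y t n ≤ H (law (Finset.univ : Finset (Fin n → ι)) fun ω => AA y t n N1 ω / (R : ℤ)) + log 2 ∧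
    H (law (Finset.univ : Finset (Fin n → ι)) fun ω => AA y t n N1 ω / (R : ℤ)) ≤
      EE y t n + log ((M + 1 : ℕ)) := by
  have hR' : (0:ℝ) < R := by exact_mod_cast hR
  simp only [AA_div n N1 R hR]
  set κ := y ^ N1 / R with hκ
  have k1 : 1 ≤ κ := by rw [hκ, le_div_iff₀ hR']; linarith
  have k2 : κ ≤ M := by rw [hκ, div_le_iff₀ hR']; linarith
  have k0 : 0 < κ := by linarith
  constructor
  · refine window _ _ Finset.univ_nonempty (fun j => ⌊(j:ℝ) / κ⌋) 2 ?_ ?_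
    · intro ω _
      refine Int.floor_le_floor ?_
      rw [div_le_iff₀ k0, add_zero]
      exact Int.floor_le _
    · intro ω _
      simp only [AA, add_zero]
      rw [Int.floor_lt]
      have a1 := Int.lt_floor_add_one (X y t n ω * y ^ n * κ)
      have a2 := Int.lt_floor_add_one ((⌊X y t n ω * y ^ n * κ⌋ : ℝ) / κ)
      push_cast
      have a3 : X y t n ω * y ^ n < ((⌊X y t n ω * y ^ n * κ⌋ : ℝ) + 1) / κ := by
        rw [lt_div_iff₀ k0]; exact a1
      rw [add_div] at a3
      have a4 : 1 / κ ≤ 1 := by rw [div_le_iff₀ k0]; linarith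
      linarith
  · refine window _ _ Finset.univ_nonempty (fun j => ⌊(j:ℝ) * κ⌋) (M + 1) ?_ ?_
    · intro ω _
      refine Int.floor_le_floor ?_
      simp only [AA, add_zero]
      gcongr
      exact Int.floor_le _
    · intro ω _
      simp only [AA, add_zero]
      rw [Int.floor_lt]
      have a1 := Int.lt_floor_add_one (X y t n ω * y ^ n)
      have a2 := Int.lt_floor_add_one ((⌊X y t n ω * y ^ n⌋ : ℝ) * κ)
      push_cast
      nlinarith

lemma averaged (hy : 1 < y) {T : ℕ} (hT : ∀ n (ω : Fin n → ι), |X y t n ω| ≤ T)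
    {δ g0 β : ℝ} (hg0 : 0 < g0) {m k B n N1 : ℕ} (hm : 1 ≤ m)
    (hcore : ∀ (Ω : Type) (s : Finset Ω) (F : Ω → ℤ) (B : ℕ)
      (Z : Dst) (β : ℝ), s.Nonempty → IsP Z → β ≤ log 2 - g0 →
      (∀ b < B, ff m b Z ≤ m * log 2 - β * m) → (∃ a, ∀ ω ∈ s, F ω / 2 ^ (B * m) = a) →
      B * β * m + ((H (law s F) - δ * B * m) / (m * log 2) - 1) * (g0 * m / 2) - H Z ≤
        k * (H (Z * law s F) - H Z))
    (hβ : β ≤ log 2 - g0) (hff : ∀ b < B, ff m b (ZZ y t N1) ≤ m * log 2 - β * m)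
    (hB1 : (2:ℝ) ^ (B * m) ≤ y ^ N1) (hB2 : y ^ N1 ≤ 2 ^ (B * m) * 2 ^ m) :
    B * β * m + ((H (LA y t n N1) - (EE y t n + log ((2 ^ m + 1 : ℕ))) - δ * B * m) / (m * log 2) - 1)
        * (g0 * m / 2) - EE y t N1 ≤
      k * (EE y t (n + N1) + log 2 + log ((2 * (T * 2 ^ m + 1) + 3 : ℕ)) - (EE y t n - log 2)
        - EE y t N1) := by
  classical
  have hL : 0 < log 2 := log_pos (by norm_num)
  have hm' : (0:ℝ) < m := by exact_mod_cast hm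
  set s : Finset (Fin n → ι) := Finset.univ with hs
  have hsne : s.Nonempty := Finset.univ_nonempty
  set A := AA y t n N1 with hA
  set Z := ZZ y t N1 with hZ
  have hZP : IsP Z := ZZ_isP N1
  set R : ℕ := 2 ^ (B * m) with hR
  have hR0 : 0 < R := by positivity
  have hRr : (R:ℝ) = 2 ^ (B * m) := by rw [hR]; push_cast; rfl
  set J : (Fin n → ι) → ℤ := fun ω => A ω / (R:ℤ) with hJ
  obtain ⟨j1, j2⟩ := HJ (t := t) hy n N1 R (2 ^ m) hR0 (by rw [hRr]; exact hB1)
    (by rw [hRr]; push_cast; exact hB2)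
  change EE y t n ≤ H (law s J) + log 2 at j1
  change H (law s J) ≤ EE y t n + _ at j2
  have hov := overlap A J hsne hZP (fun x => x / (R:ℤ) - ((T * 2 ^ m + 1 : ℕ) : ℤ) - 1)
    (2 * (T * 2 ^ m + 1) + 3) (by
      intro ω _ z hz
      obtain ⟨ω', _, hω'⟩ := law_supp hz
      have hz2 := AA_abs hy hT N1 ω'
      rw [hω'] at hz2
      refine mul_supp_abs (by exact_mod_cast hR0) ?_
      have hR1 : (1:ℝ) ≤ 2 ^ (B * m) := one_le_pow₀ (by norm_num)
      have : |(z:ℝ)| ≤ (T * 2 ^ m + 1) * R := by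
        rw [hRr]
        have : (T:ℝ) * y ^ N1 ≤ T * (2 ^ (B * m) * 2 ^ m) := by gcongr
        linarith
      exact_mod_cast this)
  have hsplit := (ZZ_split (t := t) hy n N1 0).2
  rw [U_zero, mul_one, mul_one] at hsplit
  change H (law s A * Z) ≤ EE y t (n + N1) + log 2 at hsplit
  have hcond := H_law_le_cond A J hsne
  change H (LA y t n N1) ≤ _ at hcond
  have hw := law_w_sum J hsne
  set w : ℤ → ℝ := fun j => (law s J).coeff j with hwdef
  set hbar := ∑ j ∈ s.image J, w j * H (law (cell s J j) A) with hhbar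
  set zbar := ∑ j ∈ s.image J, w j * H (law (cell s J j) A * Z) with hzbar
  change H (law s J) + zbar ≤ _ at hov
  change _ ≤ H (law s J) + hbar at hcond
  change ∑ j ∈ s.image J, w j = 1 at hw
  have hstep : ∀ j ∈ s.image J, w j * (B * β * m + ((H (law (cell s J j) A) - δ * B * m) / (m * log 2) - 1)
      * (g0 * m / 2) - H Z) ≤ w j * (k * (H (law (cell s J j) A * Z) - H Z)) := by
    intro j hj
    refine mul_le_mul_of_nonneg_left ?_ (law_w_nn J hsne j)
    rw [mul_comm (law _ _)]
    refine hcore _ (cell s J j) A B Z β (cell_nonempty hj) hZP hβ hff ⟨j, fun ω hω => ?_⟩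
    have := (mem_cell.1 hω).2
    rw [← this, hJ]
    simp [hR]
  have hsumm := Finset.sum_le_sum hstep
  have e1 : ∑ j ∈ s.image J, w j * (B * β * m + ((H (law (cell s J j) A) - δ * B * m) / (m * log 2) - 1)
      * (g0 * m / 2) - H Z) = B * β * m + ((hbar - δ * B * m) / (m * log 2) - 1)
        * (g0 * m / 2) - H Z := by
    have : ∀ j, w j * (B * β * m + ((H (law (cell s J j) A) - δ * B * m) / (m * log 2) - 1)
      * (g0 * m / 2) - H Z) = w j * (B * β * m + ((- δ * B * m) / (m * log 2) - 1)
      * (g0 * m / 2) - H Z) + w j * H (law (cell s J j) A) * ((m * log 2)⁻¹ * (g0 * m / 2)) := by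
      intro j; field_simp; ring
    rw [Finset.sum_congr rfl fun j _ => this j, Finset.sum_add_distrib, ← Finset.sum_mul,
      ← Finset.sum_mul, hw, ← hhbar]
    field_simp; ring
  have e2 : ∑ j ∈ s.image J, w j * (k * (H (law (cell s J j) A * Z) - H Z)) = k * (zbar - H Z) := by
    have : ∀ j, w j * (k * (H (law (cell s J j) A * Z) - H Z)) =
        (w j * H (law (cell s J j) A * Z)) * k + w j * (- k * H Z) := by intro j; ring
    rw [Finset.sum_congr rfl fun j _ => this j, Finset.sum_add_distrib, ← Finset.sum_mul,
      ← Finset.sum_mul, hw, ← hzbar]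
    ring
  rw [e1, e2] at hsumm
  have hk : (0:ℝ) ≤ k := Nat.cast_nonneg k
  have f1 : k * (zbar - H Z) ≤ k * (EE y t (n + N1) + log 2 + log ((2 * (T * 2 ^ m + 1) + 3 : ℕ)) -
      (EE y t n - log 2) - EE y t N1) := by
    refine mul_le_mul_of_nonneg_left ?_ hk
    change zbar - H Z ≤ _ - H Z
    linarith
  have f2 : ((H (LA y t n N1) - (EE y t n + log ((2 ^ m + 1 : ℕ))) - δ * B * m) / (m * log 2) - 1)
        * (g0 * m / 2) ≤ ((hbar - δ * B * m) / (m * log 2) - 1) * (g0 * m / 2) := by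
    gcongr
    linarith
  change _ - H Z ≤ _
  linarith

end hom

end HE

namespace HE

open Real

section hom

variable {ι : Type} [Fintype ι] [Nonempty ι]
variable {y : ℝ} {t : ι → ℝ}

lemma H_LA (n N1 : ℕ) (h : ∀ ω ω' : Fin n → ι, ω ≠ ω' → 1 ≤ |X y t n ω - X y t n ω'| * y ^ (n + N1))
    (hy : 1 < y) : H (LA y t n N1) = n * log (Fintype.card ι) := by
  rw [LA, H_law_inj Finset.univ_nonempty]
  · simp
  · intro a _ b _ hab
    by_contra hne
    have h1 := h a b hne
    have h2 := Int.abs_sub_lt_one_of_floor_eq_floor hab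
    rw [← sub_mul, abs_mul, abs_of_nonneg (show (0:ℝ) ≤ y ^ (n + N1) by positivity)] at h2
    linarith

set_option maxHeartbeats 1600000 in
theorem D5 (hy : 1 < y) (hM : log (Fintype.card ι) < log y) (q : ℕ) (hq : 2 ≤ q)
    (hE : ∀ n0 : ℕ, ∃ n ≥ n0, ∀ ω ω' : Fin n → ι, ω ≠ ω' →
      1 ≤ |X y t n ω - X y t n ω'| * y ^ (q * n)) :
    Tendsto (fun n : ℕ => EE y t n / n) atTop (𝓝 (log (Fintype.card ι))) := by
  obtain ⟨α, C, hC0, hlim, hup, hαM⟩ := exists_alpha hy t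
  rcases hαM.eq_or_lt with hα | hα
  · rwa [← hα]
  exfalso
  have hL : 0 < log 2 := log_pos (by norm_num)
  have hlam : 0 < log y := log_pos hy
  have hα0 : 0 ≤ α := ge_of_tendsto' hlim fun n => div_nonneg (H_nonneg (ZZ_isP n)) (Nat.cast_nonneg n)
  set M := (Fintype.card ι : ℝ) with hMdef
  set L := log 2 with hLdef
  set lam := log y with hlamdef
  obtain ⟨δ1, hδ1⟩ : ∃ x, x = (log M - α) / 2 := ⟨_, rfl⟩
  have hδ1p : 0 < δ1 := by rw [hδ1]; linarith
  obtain ⟨β0, hβ0⟩ : ∃ x, x = α * L / lam := ⟨_, rfl⟩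
  have hβ0L : β0 * lam = α * L := by rw [hβ0]; field_simp
  obtain ⟨g0, hg0⟩ : ∃ x, x = L - β0 := ⟨_, rfl⟩
  have hg0p : 0 < g0 := by
    rw [hg0, sub_pos]
    refine lt_of_mul_lt_mul_right ?_ hlam.le
    rw [hβ0L, mul_comm]
    exact mul_lt_mul_of_pos_left (hα.trans hM) hL
  obtain ⟨Q, hQ⟩ : ∃ x : ℝ, x = q - 1 := ⟨_, rfl⟩
  have hQp : 0 < Q := by
    have : (2:ℝ) ≤ q := by exact_mod_cast hq
    rw [hQ]; linarith
  obtain ⟨δ, hδ⟩ : ∃ x, x = δ1 * L / (Q * lam) := ⟨_, rfl⟩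
  have hδp : 0 < δ := by rw [hδ]; positivity
  have hδe : δ * (Q * lam) = δ1 * L := by rw [hδ]; field_simp
  obtain ⟨E, hE'⟩ : ∃ x, x = δ1 * g0 / (8 * L) := ⟨_, rfl⟩
  have hEp : 0 < E := by rw [hE']; positivity
  obtain ⟨κ', hκ'⟩ : ∃ x, x = E * L / (Q * lam) := ⟨_, rfl⟩
  have hκ'p : 0 < κ' := by rw [hκ']; positivity
  have hκ'e : κ' * (Q * lam) = E * L := by rw [hκ']; field_simp
  obtain ⟨β, hβ⟩ : ∃ x, x = β0 - κ' := ⟨_, rfl⟩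
  obtain ⟨T, hT⟩ := exists_T hy t
  obtain ⟨C1, hC1⟩ := ff_ZZ hy t
  obtain ⟨m0, hm0⟩ := core δ g0 hδp hg0p
  -- choose m
  have low : ∀ η > 0, ∃ n0 : ℕ, ∀ n ≥ n0, (α - η) * n ≤ EE y t n := by
    intro η hη
    have := hlim.eventually (lt_mem_nhds (show α - η < α by linarith))
    obtain ⟨n0, hn0⟩ := eventually_atTop.1 this
    refine ⟨max n0 1, fun n hn => ?_⟩
    have h1 := hn0 n (le_of_max_le_left hn)
    have h2 : (0:ℝ) < n := by exact_mod_cast le_of_max_le_right hn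
    rw [lt_div_iff₀ h2] at h1
    exact h1.le
  obtain ⟨η, hη⟩ : ∃ x, x = κ' * lam / (2 * L) := ⟨_, rfl⟩
  have hηp : 0 < η := by rw [hη]; positivity
  have hηe : η * L = κ' * lam / 2 := by rw [hη]; field_simp
  obtain ⟨p0, hp0⟩ := low η hηp
  obtain ⟨m1, hm1⟩ := exists_nat_ge (((p0:ℝ) + 1) * lam / L)
  obtain ⟨m2, hm2⟩ := exists_nat_ge (2 * (α + C1) / κ')
  obtain ⟨m, hmdef⟩ : ∃ m, m = max m0 (max m1 m2) := ⟨_, rfl⟩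
  obtain ⟨hm, k, hk, hcore⟩ := hm0 m (hmdef ▸ le_max_left _ _)
  have hm1' : ((p0:ℝ) + 1) * lam / L ≤ m := hm1.trans (by
    rw [hmdef]; exact_mod_cast (le_max_left m1 m2).trans (le_max_right _ _))
  have hm2' : 2 * (α + C1) / κ' ≤ m := hm2.trans (by
    rw [hmdef]; exact_mod_cast (le_max_right m1 m2).trans (le_max_right _ _))
  rw [div_le_iff₀ hL] at hm1'
  rw [div_le_iff₀ hκ'p] at hm2'
  have hmp : (0:ℝ) < m := by exact_mod_cast hm
  obtain ⟨p, hp1, hp2⟩ := exists_nat_pow_near (x := (2:ℝ) ^ m) (y := y) (one_le_pow₀ (by norm_num)) hy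
  have hp1' : p * lam ≤ m * L := by
    have := log_le_log (by positivity) hp1
    rwa [log_pow, log_pow] at this
  have hp2' : m * L < (p + 1) * lam := by
    have := log_lt_log (by positivity) hp2
    rw [log_pow, log_pow] at this
    push_cast at this; exact this
  have hpp0 : p0 ≤ p := by
    have : ((p0:ℝ) + 1) * lam < (p + 1) * lam := by linarith
    have := lt_of_mul_lt_mul_right this hlam.le
    have : (p0:ℝ) < p := by linarith
    exact le_of_lt (by exact_mod_cast this)
  have hEp' : β * m + C1 ≤ EE y t p := by
    refine le_trans ?_ (hp0 p hpp0)
    refine le_of_mul_le_mul_right ?_ hlam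
    have a1 : α * (m * L) ≤ α * ((p + 1) * lam) := mul_le_mul_of_nonneg_left hp2'.le hα0
    have a2 : η * (p * lam) ≤ η * (m * L) := mul_le_mul_of_nonneg_left hp1' hηp.le
    have a3 : η * (m * L) = m * κ' * lam / 2 := by rw [show η * (m * L) = m * (η * L) by ring, hηe]; ring
    have a4 : α * (m * L) = m * (β0 * lam) := by rw [hβ0L]; ring
    have a5 : 2 * (α + C1) * lam ≤ m * κ' * lam := mul_le_mul_of_nonneg_right hm2' hlam.le
    rw [hβ]
    linarith
  -- choose κ
  have hkp : (0:ℝ) < k := by exact_mod_cast hk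
  have hqp : (0:ℝ) < q := by linarith [hQ]
  obtain ⟨κ, hκ⟩ : ∃ x, x = E / (k * q) := ⟨_, rfl⟩
  have hκp : 0 < κ := by rw [hκ]; positivity
  have hκe : k * (κ * q) = E := by rw [hκ]; field_simp
  obtain ⟨n0, hn0⟩ := low κ hκp
  set K1 := log ((2 ^ m + 1 : ℕ)) with hK1
  set K2 := log ((2 * (T * 2 ^ m + 1) + 3 : ℕ)) with hK2
  obtain ⟨D, hD⟩ : ∃ x, x = |β| * m + ((C + K1) / (m * L) + 1) * (g0 * m / 2) + C + k * (C + 2 * L + K2) :=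
    ⟨_, rfl⟩
  obtain ⟨n1, hn1⟩ := exists_nat_gt (D / (2 * E))
  obtain ⟨n, hn, hsep⟩ := hE (max n0 n1)
  have hnn0 : n0 ≤ n := le_of_max_le_left hn
  have hnD : D < n * (2 * E) := by
    rw [← div_lt_iff₀ (by positivity)]
    exact hn1.trans_le (by exact_mod_cast le_of_max_le_right hn)
  obtain ⟨N1, hN1⟩ : ∃ N1, N1 = (q - 1) * n := ⟨_, rfl⟩
  have hNq : n + N1 = q * n := by
    rw [hN1]; obtain ⟨r, rfl⟩ : ∃ r, q = r + 1 := ⟨q - 1, by omega⟩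
    simp; ring
  have hNn : n ≤ N1 := by
    rw [hN1]; exact Nat.le_mul_of_pos_left n (by omega)
  have hN1r : (N1:ℝ) = Q * n := by
    have : (n:ℝ) + N1 = q * n := by exact_mod_cast hNq
    rw [hQ]; linarith
  obtain ⟨B, hB1, hB2⟩ := exists_nat_pow_near (x := y ^ N1) (y := (2:ℝ) ^ m) (one_le_pow₀ hy.le)
    (one_lt_pow₀ (by norm_num) (by omega))
  have hB1e : (2:ℝ) ^ (B * m) ≤ y ^ N1 := by rw [mul_comm, pow_mul]; exact hB1
  have hB2e : y ^ N1 ≤ (2:ℝ) ^ (B * m) * 2 ^ m := by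
    rw [mul_comm B, pow_mul, ← pow_succ]; exact hB2.le
  have av := averaged (n := n) hy hT hg0p hm hcore (β := β) (by rw [hg0, hβ]; linarith) (fun b hb => by
    have hb' : (2:ℝ) ^ ((b + 1) * m) ≤ y ^ N1 :=
      (pow_le_pow_right₀ (by norm_num) (Nat.mul_le_mul_right m hb)).trans hB1e
    have := hC1 m p b N1 hp1 hb'
    linarith) hB1e hB2e
  rw [H_LA n N1 (by rw [hNq]; exact hsep) hy, hNq] at av
  have b1 := hup n
  have b2 := hup (q * n)
  have b3 := hup N1
  have b4 := hn0 n hnn0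
  have b5 := hn0 N1 (hnn0.trans hNn)
  push_cast at b2
  -- bounds on B m
  have c1 : (B:ℝ) * m * L ≤ Q * n * lam := by
    have := log_le_log (by positivity) hB1e
    rw [log_pow, log_pow, hN1r] at this
    push_cast at this; exact this
  have c2 : Q * n * lam ≤ (B:ℝ) * m * L + m * L := by
    have := log_le_log (by positivity) hB2e
    rw [log_mul (by positivity) (by positivity), log_pow, log_pow, log_pow, hN1r] at this
    push_cast at this; exact this
  have c3 : β * (Q * n * lam / L) - |β| * m ≤ B * β * m := by
    have d1 : (B:ℝ) * m ≤ Q * n * lam / L := by rw [le_div_iff₀ hL]; exact c1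
    have d2 : Q * n * lam / L ≤ B * m + m := by rw [div_le_iff₀ hL]; linarith
    rcases le_total 0 β with h | h
    · rw [abs_of_nonneg h]; linarith [mul_le_mul_of_nonneg_left d2 h]
    · rw [abs_of_nonpos h]; linarith [mul_le_mul_of_nonpos_left d1 h, mul_nonneg (neg_nonneg.2 h) hmp.le]
  have c4 : β * (Q * n * lam / L) = α * (Q * n) - E * n := by
    have e1 : β0 * (Q * n * lam / L) = α * (Q * n) := by
      rw [show β0 * (Q * n * lam / L) = (β0 * lam) * (Q * n) / L by ring, hβ0L]; field_simp
    have e2 : κ' * (Q * n * lam / L) = E * n := by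
      rw [show κ' * (Q * n * lam / L) = (κ' * (Q * lam)) * n / L by ring, hκ'e]; field_simp
    rw [hβ, sub_mul, e1, e2]
  have c5 : δ * B * m ≤ δ1 * n := by
    refine le_of_mul_le_mul_right ?_ hL
    have : δ * (B * m * L) ≤ δ * (Q * n * lam) := mul_le_mul_of_nonneg_left c1 hδp.le
    have e : δ * (Q * n * lam) = δ1 * L * n := by rw [← hδe]; ring
    linarith
  have c6 : ((δ1 * n - C - K1) / (m * L) - 1) * (g0 * m / 2) ≤
      ((n * log M - (EE y t n + K1) - δ * B * m) / (m * L) - 1) * (g0 * m / 2) := by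
    have : n * log M = α * n + 2 * δ1 * n := by rw [hδ1]; ring
    refine mul_le_mul_of_nonneg_right (sub_le_sub_right (div_le_div_of_nonneg_right ?_ (by positivity)) 1)
      (by positivity)
    linarith
  have c7 : ((δ1 * n - C - K1) / (m * L) - 1) * (g0 * m / 2) =
      4 * E * n - ((C + K1) / (m * L) + 1) * (g0 * m / 2) := by
    rw [hE']; field_simp; ring
  have c8 : (k:ℝ) * (EE y t (q * n) + L + K2 - (EE y t n - L) - EE y t N1) ≤
      E * n + k * (C + 2 * L + K2) := by
    have : (k:ℝ) * (EE y t (q * n) + L + K2 - (EE y t n - L) - EE y t N1) ≤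
      k * (κ * q * n + C + 2 * L + K2) := by
      refine mul_le_mul_of_nonneg_left ?_ hkp.le
      rw [hN1r, hQ] at b5
      linarith
    have e : k * (κ * q * n + C + 2 * L + K2) = (k * (κ * q)) * n + k * (C + 2 * L + K2) := by ring
    rw [e, hκe] at this
    exact this
  rw [hN1r] at b3
  change _ + ((n * log M - (EE y t n + K1) - δ * B * m) / (m * L) - 1) * (g0 * m / 2) - _ ≤
    (k:ℝ) * (EE y t (q * n) + L + K2 - (EE y t n - L) - EE y t N1) at av
  linarith

end hom

end HE

namespace HE

open Real

section cantor

variable {b : ℕ} (r : ℝ) (τ : Fin b → ℝ)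

/-- coding map -/
def cod (d : ℕ → Fin b) : ℝ := ∑' k : ℕ, r ^ k * τ (d k)

variable {r τ}

lemma cod_summable (hr0 : 0 < r) (hr1 : r < 1) (d : ℕ → Fin b) : Summable fun k : ℕ => r ^ k * τ (d k) := by
  have hs : Summable fun k : ℕ => r ^ k * ∑ i, |τ i| :=
    (summable_geometric_of_lt_one hr0.le hr1).mul_right _
  refine Summable.of_norm_bounded hs fun k => ?_
  rw [norm_mul, Real.norm_eq_abs, Real.norm_eq_abs, abs_of_nonneg (by positivity)]
  refine mul_le_mul_of_nonneg_left ?_ (by positivity)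
  exact Finset.single_le_sum (f := fun i => |τ i|) (fun i _ => abs_nonneg _) (Finset.mem_univ (d k))

lemma cod_shift (hr0 : 0 < r) (hr1 : r < 1) (d : ℕ → Fin b) :
    cod r τ d = τ (d 0) + r * cod r τ (fun k => d (k + 1)) := by
  rw [cod, (cod_summable hr0 hr1 d).tsum_eq_zero_add, cod, ← tsum_mul_left]
  simp [pow_succ', mul_assoc]

lemma cod_mem (hr0 : 0 < r) (hr1 : r < 1) {K : Set ℝ} (hKc : IsClosed K) (hKn : K.Nonempty)
    (hinv : ∀ d, ∀ x ∈ K, r * x + τ d ∈ K) (d : ℕ → Fin b) : cod r τ d ∈ K := by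
  obtain ⟨x0, hx0⟩ := hKn
  have h1 : ∀ (n : ℕ) (d : ℕ → Fin b), (∑ k ∈ Finset.range n, r ^ k * τ (d k)) + r ^ n * x0 ∈ K := by
    intro n
    induction n with
    | zero => intro d; simpa using hx0
    | succ n ih =>
      intro d
      have := hinv (d 0) _ (ih fun k => d (k + 1))
      convert this using 1
      rw [Finset.sum_range_succ', mul_add, Finset.mul_sum]
      simp only [pow_succ']
      simp only [pow_zero, one_mul, mul_assoc]
      ring
  have h2 : Tendsto (fun n : ℕ => (∑ k ∈ Finset.range n, r ^ k * τ (d k)) + r ^ n * x0) atTop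
      (𝓝 (cod r τ d + 0 * x0)) :=
    (cod_summable hr0 hr1 d).hasSum.tendsto_sum_nat.add
      ((tendsto_pow_atTop_nhds_zero_of_lt_one hr0.le hr1).mul_const _)
  rw [zero_mul, add_zero] at h2
  exact hKc.mem_of_tendsto h2 (Eventually.of_forall fun n => h1 n d)

lemma cod_sep (hr0 : 0 < r) (hr1 : r < 1) {D : ℝ} (hD : ∀ d : ℕ → Fin b, |cod r τ d| ≤ D)
    (hsep : ∀ d d', d ≠ d' → (2 * D + 1) * r ≤ |τ d - τ d'|) (j : ℕ) :
    ∀ (d d' : ℕ → Fin b), (∀ i < j, d i = d' i) → d j ≠ d' j →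
      r ^ (j + 1) ≤ |cod r τ d - cod r τ d'| := by
  induction j with
  | zero =>
    intro d d' _ hne
    rw [cod_shift hr0 hr1 d, cod_shift hr0 hr1 d']
    have h1 := hsep _ _ hne
    have h2 := abs_le.1 (hD fun k => d (k + 1))
    have h3 := abs_le.1 (hD fun k => d' (k + 1))
    set u := cod r τ fun k => d (k + 1)
    set v := cod r τ fun k => d' (k + 1)
    have h4 : |r * (v - u)| ≤ r * (2 * D) := by
      rw [abs_mul, abs_of_pos hr0]
      refine mul_le_mul_of_nonneg_left ?_ hr0.le
      rw [abs_le]; constructor <;> linarith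
    have h5 := abs_sub_abs_le_abs_sub (τ (d 0) - τ (d' 0)) (r * (v - u))
    have e : τ (d 0) + r * u - (τ (d' 0) + r * v) = τ (d 0) - τ (d' 0) - r * (v - u) := by ring
    rw [e, zero_add, pow_one]
    linarith
  | succ j ih =>
    intro d d' h hne
    rw [cod_shift hr0 hr1 d, cod_shift hr0 hr1 d', h 0 (by omega)]
    have := ih (fun k => d (k + 1)) (fun k => d' (k + 1)) (fun i hi => h (i + 1) (by omega)) hne
    rw [add_sub_add_left_eq_sub, ← mul_sub, abs_mul, abs_of_pos hr0, pow_succ']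
    exact mul_le_mul_of_nonneg_left this hr0.le

lemma cantor (hb : 1 < b) (hr0 : 0 < r) (hr1 : r < 1) {K : Set ℝ} (hKc : IsClosed K) (hKn : K.Nonempty)
    {D : ℝ} (hD : ∀ x ∈ K, |x| ≤ D)
    (hinv : ∀ d, ∀ x ∈ K, r * x + τ d ∈ K)
    (hsep : ∀ d d', d ≠ d' → (2 * D + 1) * r ≤ |τ d - τ d'|) :
    ENNReal.ofReal (log b / log r⁻¹) ≤ dimH K := by
  classical
  have hmem := cod_mem hr0 hr1 hKc hKn hinv
  have hs := cod_sep hr0 hr1 (fun d => hD _ (hmem d)) hsep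
  have hb0 : (1:ℝ) < b := by exact_mod_cast hb
  have hlb : 0 < log b := log_pos hb0
  have hlr : 0 < log r⁻¹ := log_pos ((one_lt_inv₀ hr0).2 hr1)
  obtain ⟨s, hsdef⟩ : ∃ s, s = log b / log r⁻¹ := ⟨_, rfl⟩
  have hs0 : 0 < s := by rw [hsdef]; positivity
  have hrs : r ^ s = (b:ℝ)⁻¹ := by
    rw [rpow_def_of_pos hr0, hsdef]
    rw [log_inv] at hlr ⊢
    have : log r * (log b / - log r) = - log b := by
      have : log r ≠ 0 := by linarith
      field_simp
    rw [this, exp_neg, exp_log (by linarith)]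
  haveI : Nonempty (ℕ → Fin b) := ⟨fun _ => ⟨0, by omega⟩⟩
  have hkey : ∀ d d' : ℕ → Fin b, |ofDigits d - ofDigits d'| ≤ b * |cod r τ d - cod r τ d'| ^ s := by
    intro d d'
    by_cases hdd : d = d'
    · rw [hdd]; simp; positivity
    have hex : ∃ j, d j ≠ d' j := by
      by_contra h; push Not at h; exact hdd (funext h)
    have h1 := Nat.find_spec hex
    have h2 : ∀ i < Nat.find hex, d i = d' i := fun i hi => by
      have := Nat.find_min hex hi; push Not at this; exact this
    refine (abs_ofDigits_sub_ofDigits_le h2).trans ?_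
    have h3 := hs _ d d' h2 h1
    have h4 := rpow_le_rpow (by positivity) h3 hs0.le
    rw [← rpow_natCast, ← rpow_mul hr0.le, mul_comm, rpow_mul hr0.le, hrs, rpow_natCast] at h4
    calc ((b:ℝ) ^ Nat.find hex)⁻¹ = b * (b:ℝ)⁻¹ ^ (Nat.find hex + 1) := by
          rw [pow_succ, inv_pow]; field_simp
      _ ≤ _ := by gcongr
  have hinj : Function.Injective (cod r τ) := by
    intro d d' h
    by_contra hdd
    have hex : ∃ j, d j ≠ d' j := by
      by_contra h; push Not at h; exact hdd (funext h)
    have h2 : ∀ i < Nat.find hex, d i = d' i := fun i hi => by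
      have := Nat.find_min hex hi; push Not at this; exact this
    have := hs _ d d' h2 (Nat.find_spec hex)
    rw [h, sub_self, abs_zero] at this
    have : 0 < r ^ (Nat.find hex + 1) := by positivity
    linarith
  set f : ℝ → ℝ := fun x => ofDigits (Function.invFun (cod r τ) x) with hf
  have hfx : ∀ d, f (cod r τ d) = ofDigits d := fun d => by
    rw [hf]; simp only [Function.leftInverse_invFun hinj d]
  have hol : HolderOnWith (b : NNReal) ⟨s, hs0.le⟩ f (Set.range (cod r τ)) := by
    rintro _ ⟨d, rfl⟩ _ ⟨d', rfl⟩
    rw [hfx, hfx, edist_dist, edist_dist, Real.dist_eq, Real.dist_eq]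
    rw [ENNReal.ofReal_rpow_of_nonneg (abs_nonneg _) (by exact hs0.le)]
    have : ((b : NNReal) : ℝ≥0∞) = ENNReal.ofReal (b:ℝ) := by simp
    rw [this, ← ENNReal.ofReal_mul (by linarith)]
    exact ENNReal.ofReal_le_ofReal (hkey d d')
  have h1 := hol.dimH_image_le (by exact hs0)
  have h2 : Set.Icc (0:ℝ) 1 ⊆ f '' Set.range (cod r τ) := by
    intro x hx
    obtain ⟨d, _, hd⟩ := ofDigits_SurjOn hb hx
    exact ⟨_, ⟨d, rfl⟩, by rw [hfx, hd]⟩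
  have h3 : dimH (Set.Icc (0:ℝ) 1) = 1 := by
    rw [Real.dimH_of_nonempty_interior (by simp)]; simp
  have h4 : (1:ℝ≥0∞) ≤ dimH K / ENNReal.ofReal s := by
    rw [← h3]
    refine (dimH_mono h2).trans (h1.trans ?_)
    have : ENNReal.ofNNReal ⟨s, hs0.le⟩ = ENNReal.ofReal s := by
      rw [ENNReal.ofReal, Real.toNNReal_of_nonneg hs0.le]; rfl
    rw [this]
    gcongr
    rintro _ ⟨d, rfl⟩; exact hmem d
  rw [← hsdef]
  have h5 := (ENNReal.le_div_iff_mul_le (Or.inl (by simpa using hs0)) (Or.inl ENNReal.ofReal_ne_top)).1 h4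
  rwa [one_mul] at h5

end cantor

section hom

variable {ι : Type} [Fintype ι] [Nonempty ι]
variable {y : ℝ} {t : ι → ℝ}

lemma X_mem (hy : 1 < y) {K : Set ℝ} (hinv : ∀ i, ∀ x ∈ K, y⁻¹ * x + t i ∈ K) (n : ℕ) :
    ∀ ω : Fin n → ι, ∀ x ∈ K, (y ^ n)⁻¹ * x + X y t n ω ∈ K := by
  induction n with
  | zero => intro ω x hx; simpa [X] using hx
  | succ n ih =>
    intro ω x hx
    have := hinv (ω 0) _ (ih (fun k => ω k.succ) x hx)
    convert this using 1
    simp only [X, Fin.sum_univ_succ, Fin.val_zero, Fin.val_succ, pow_zero, inv_one, one_mul, mul_add,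
      Finset.mul_sum, pow_succ', mul_inv, mul_assoc]
    ring

lemma dim_n (hy : 1 < y) {K : Set ℝ} (hKc : IsCompact K) (hKn : K.Nonempty)
    (hinv : ∀ i, ∀ x ∈ K, y⁻¹ * x + t i ∈ K) : ∃ g : ℝ, ∀ n : ℕ, 1 ≤ n →
    ENNReal.ofReal ((EE y t n - g) / (n * log y)) ≤ dimH K := by
  classical
  obtain ⟨D, hD⟩ : ∃ D : ℝ, ∀ x ∈ K, |x| ≤ D := by
    obtain ⟨D, hD⟩ := hKc.isBounded.exists_norm_le
    exact ⟨D, hD⟩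
  obtain ⟨g, hg⟩ := exists_nat_ge (2 * D + 2)
  have hD0 : 0 ≤ D := by obtain ⟨x, hx⟩ := hKn; exact (abs_nonneg _).trans (hD x hx)
  have hg0 : 0 < g := by
    have : (0:ℝ) < g := by linarith
    exact_mod_cast this
  refine ⟨log g, fun n hn => ?_⟩
  have hy0 : 0 < y := by linarith
  have hlam : 0 < log y := log_pos hy
  have hn' : (0:ℝ) < n := by exact_mod_cast hn
  set V := Finset.univ.image (AA y t n 0) with hV
  have hVc : EE y t n ≤ log V.card := H_le_log_card (ZZ_isP n) (law_supp_image _)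
  have hVpos : 0 < V.card := Finset.card_pos.2 (Finset.univ_nonempty.image _)
  obtain ⟨c, _, hc⟩ := Finset.exists_le_card_fiber_of_nsmul_le_card_of_maps_to (s := V)
    (t := Finset.Ico (0:ℤ) g) (f := fun x => x % (g:ℤ)) (b := (V.card : ℝ) / g) (fun a _ => by
      rw [Finset.mem_Ico]
      exact ⟨Int.emod_nonneg _ (by omega), Int.emod_lt_of_pos _ (by omega)⟩)
    ⟨0, by rw [Finset.mem_Ico]; omega⟩ (by
      have hg' : (g:ℝ) ≠ 0 := by positivity
      simp; field_simp; rfl)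
  set V' := V.filter fun x => x % (g:ℤ) = c with hV'
  have hVpos' : (0:ℝ) < V.card := by exact_mod_cast hVpos
  have hgp : (0:ℝ) < g := by exact_mod_cast hg0
  have hV'pos : (0:ℝ) < V'.card := lt_of_lt_of_le (by positivity) hc
  have hlog : EE y t n - log g ≤ log V'.card := by
    have h1 := log_le_log (by positivity) hc
    rw [log_div hVpos'.ne' hgp.ne'] at h1
    linarith
  by_cases hb : 1 < V'.card
  swap
  · have : V'.card = 1 := by
      have : 0 < V'.card := by exact_mod_cast hV'pos
      omega
    rw [this] at hlog
    simp only [Nat.cast_one, log_one] at hlog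
    rw [ENNReal.ofReal_of_nonpos (div_nonpos_of_nonpos_of_nonneg hlog (by positivity))]
    exact zero_le
  set e := V'.equivFin.symm with he
  have hch : ∀ d : Fin V'.card, ∃ ω : Fin n → ι, AA y t n 0 ω = (e d : ℤ) := by
    intro d
    have := (Finset.mem_filter.1 (e d).2).1
    obtain ⟨ω, _, h⟩ := Finset.mem_image.1 this
    exact ⟨ω, h⟩
  choose W hW using hch
  have hyn : 0 < y ^ n := by positivity
  have h1 := cantor (r := (y ^ n)⁻¹) (τ := fun d => X y t n (W d)) hb (by positivity)
    (inv_lt_one_of_one_lt₀ (one_lt_pow₀ hy (by omega))) hKc.isClosed hKn hD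
    (fun d x hx => X_mem hy hinv n _ x hx) (by
      intro d d' hne
      have hne' : (e d : ℤ) ≠ e d' := fun h => hne (e.injective (Subtype.ext h))
      have m1 := (Finset.mem_filter.1 (e d).2).2
      have m2 := (Finset.mem_filter.1 (e d').2).2
      have hdvd : (g:ℤ) ∣ (e d : ℤ) - e d' := Int.ModEq.dvd (m2.trans m1.symm)
      have hge : (g:ℤ) ≤ |(e d : ℤ) - e d'| := by
        refine Int.le_of_dvd (abs_pos.2 (sub_ne_zero.2 hne')) ?_
        rwa [dvd_abs]
      have hge' : (g:ℝ) ≤ |((e d : ℤ) : ℝ) - (e d' : ℤ)| := by exact_mod_cast hge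
      rw [← hW, ← hW] at hge'
      simp only [AA, add_zero] at hge'
      rw [← div_eq_mul_inv, div_le_iff₀ hyn]
      have a1 := Int.floor_le (X y t n (W d) * y ^ n)
      have a2 := Int.lt_floor_add_one (X y t n (W d) * y ^ n)
      have a3 := Int.floor_le (X y t n (W d') * y ^ n)
      have a4 := Int.lt_floor_add_one (X y t n (W d') * y ^ n)
      have e1 : |X y t n (W d) - X y t n (W d')| * y ^ n =
        |X y t n (W d) * y ^ n - X y t n (W d') * y ^ n| := by
        rw [← sub_mul, abs_mul, abs_of_pos hyn]
      rw [e1]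
      rcases le_abs.1 hge' with h | h
      · refine le_trans ?_ (le_abs_self _); linarith
      · refine le_trans ?_ (neg_le_abs _); linarith)
  refine le_trans (ENNReal.ofReal_le_ofReal ?_) h1
  rw [inv_inv, log_pow]
  gcongr

theorem dim_hom (hy : 1 < y) (hM : log (Fintype.card ι) < log y) (q : ℕ) (hq : 2 ≤ q)
    (hE : ∀ n0 : ℕ, ∃ n ≥ n0, ∀ ω ω' : Fin n → ι, ω ≠ ω' →
      1 ≤ |X y t n ω - X y t n ω'| * y ^ (q * n))
    {K : Set ℝ} (hKc : IsCompact K) (hKn : K.Nonempty)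
    (hinv : ∀ i, ∀ x ∈ K, y⁻¹ * x + t i ∈ K) :
    ENNReal.ofReal (log (Fintype.card ι) / log y) ≤ dimH K := by
  have h1 := D5 hy hM q hq hE
  obtain ⟨g, hg⟩ := dim_n hy hKc hKn hinv
  have hlam : 0 < log y := log_pos hy
  have h2 : Tendsto (fun n : ℕ => (EE y t n - g) / (n * log y)) atTop
      (𝓝 ((log (Fintype.card ι) - 0) / log y)) := by
    refine ((h1.sub (tendsto_const_div_atTop_nhds_zero_nat g)).div_const (log y)).congr fun n => ?_
    rw [← sub_div, div_div]
  rw [sub_zero] at h2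
  refine le_of_tendsto (ENNReal.tendsto_ofReal h2) ?_
  filter_upwards [eventually_ge_atTop 1] with n hn using hg n hn

end hom

end HE

namespace HE

open Real

section words

variable {N : ℕ} {cv u : Fin N → ℝ}

lemma psi_append (w1 w2 : List (Fin N)) (x : ℝ) :
    psiWord cv u (w1 ++ w2) x = psiWord cv u w1 (psiWord cv u w2 x) := by
  induction w1 with
  | nil => rfl
  | cons i w ih => simp only [List.cons_append, psiWord, ih]

lemma psi_affine (w : List (Fin N)) (x : ℝ) :
    psiWord cv u w x = (w.map cv).prod * x + psiWord cv u w 0 := by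
  induction w with
  | nil => simp [psiWord]
  | cons i w ih => simp only [psiWord, List.map_cons, List.prod_cons]; rw [ih]; ring

lemma psi_mem {K : Set ℝ} (hK : ∀ i, ∀ x ∈ K, cv i * x + u i ∈ K) (w : List (Fin N)) :
    ∀ x ∈ K, psiWord cv u w x ∈ K := by
  induction w with
  | nil => intro x hx; exact hx
  | cons i w ih => intro x hx; exact hK i _ (ih x hx)

lemma list_fn {m : ℕ} (l : List (Fin N)) (h : l.length = m) : ∃ w : Fin m → Fin N, List.ofFn w = l := by
  subst h; exact ⟨l.get, List.ofFn_get l⟩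

lemma esc_list (h : HochmanESC N cv u) : ∃ ε : ℝ, 0 < ε ∧ ε ≤ 1 ∧ ∃ nk : ℕ → ℕ, StrictMono nk ∧
    ∀ k, ∀ l1 l2 : List (Fin N), l1.length = nk k → l2.length = nk k → l1 ≠ l2 →
      (l1.map cv).prod = (l2.map cv).prod →
      ε ^ (nk k) ≤ |psiWord cv u l1 0 - psiWord cv u l2 0| := by
  obtain ⟨ε, hε, nk, hnk, h⟩ := h
  refine ⟨min ε 1, lt_min hε one_pos, min_le_right _ _, nk, hnk, fun k l1 l2 h1 h2 hne hp => ?_⟩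
  obtain ⟨w1, rfl⟩ := list_fn l1 h1
  obtain ⟨w2, rfl⟩ := list_fn l2 h2
  rw [List.map_ofFn, List.map_ofFn, List.prod_ofFn, List.prod_ofFn] at hp
  have := h k w1 w2 (fun e => hne (by rw [e])) hp
  refine le_trans ?_ this.le
  exact pow_le_pow_left₀ (le_min hε.le zero_le_one) (min_le_left _ _) _

variable {ℓ : ℕ}

/-- concatenation of blocks -/
def cat (n : ℕ) (ω : Fin n → (Fin ℓ → Fin N)) : List (Fin N) :=
  (List.ofFn fun k => List.ofFn (ω k)).flatten

lemma cat_succ (n : ℕ) (ω : Fin (n + 1) → (Fin ℓ → Fin N)) :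
    cat (n + 1) ω = List.ofFn (ω 0) ++ cat n (fun k => ω k.succ) := by
  simp [cat, List.ofFn_succ]

lemma cat_length (n : ℕ) (ω : Fin n → (Fin ℓ → Fin N)) : (cat n ω).length = n * ℓ := by
  induction n with
  | zero => simp [cat]
  | succ n ih => rw [cat_succ, List.length_append, ih, List.length_ofFn]; ring

lemma cat_inj (n : ℕ) (ω ω' : Fin n → (Fin ℓ → Fin N)) (h : cat n ω = cat n ω') : ω = ω' := by
  induction n with
  | zero => exact Subsingleton.elim _ _
  | succ n ih =>
    rw [cat_succ, cat_succ] at h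
    obtain ⟨h1, h2⟩ := List.append_inj h (by simp)
    have h3 := ih _ _ h2
    have h4 := List.ofFn_injective h1
    funext k
    refine Fin.cases h4 (fun k => congrFun h3 k) k

lemma cat_prod {r : ℝ} (n : ℕ) (ω : Fin n → (Fin ℓ → Fin N)) (h : ∀ k, ∏ j, cv (ω k j) = r) :
    ((cat n ω).map cv).prod = r ^ n := by
  induction n with
  | zero => simp [cat]
  | succ n ih =>
    rw [cat_succ, List.map_append, List.prod_append, ih _ (fun k => h k.succ), List.map_ofFn,
      List.prod_ofFn, pow_succ']
    congr 1
    exact h 0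

theorem blockdim (hc : ∀ i, cv i ∈ Set.Ioo (0 : ℝ) 1) (hH : HochmanESC N cv u) (i0 : Fin N)
    (hℓ : 1 ≤ ℓ) {K : Set ℝ} (hKc : IsCompact K) (hKn : K.Nonempty)
    (hinv : ∀ i, ∀ x ∈ K, cv i * x + u i ∈ K)
    (W : Finset (Fin ℓ → Fin N)) (hW : W.Nonempty) (r : ℝ) (hr : ∀ w ∈ W, ∏ k, cv (w k) = r)
    (hcard : log W.card < log r⁻¹) :
    ENNReal.ofReal (log W.card / log r⁻¹) ≤ dimH K := by
  have : Nonempty W := hW.to_subtype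
  obtain ⟨w0, hw0⟩ := hW
  have hr0 : 0 < r := by rw [← hr w0 hw0]; exact Finset.prod_pos fun k _ => (hc _).1
  have hr1 : r < 1 := by
    have : 0 < log r⁻¹ := lt_of_le_of_lt (log_natCast_nonneg _) hcard
    rw [log_inv] at this
    by_contra h
    have := log_nonneg (not_lt.1 h)
    linarith
  set y := r⁻¹ with hy
  have hy1 : 1 < y := (one_lt_inv₀ hr0).2 hr1
  have hyi : y⁻¹ = r := inv_inv r
  set t : W → ℝ := fun w => psiWord cv u (List.ofFn w.1) 0 with ht
  have hX : ∀ n (ω : Fin n → W), X y t n ω = psiWord cv u (cat n fun k => (ω k).1) 0 := by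
    intro n
    induction n with
    | zero => intro ω; simp [X, cat, psiWord]
    | succ n ih =>
      intro ω
      rw [cat_succ, psi_append, psi_affine, ← ih (fun k => ω k.succ), List.map_ofFn, List.prod_ofFn]
      have : ∏ i, (cv ∘ ((ω 0).1 : Fin ℓ → Fin N)) i = y⁻¹ := by rw [hyi]; exact hr _ (ω 0).2
      rw [this]
      simp only [X, Fin.sum_univ_succ, Fin.val_zero, Fin.val_succ, pow_zero, inv_one, one_mul,
        Finset.mul_sum, pow_succ', mul_inv, mul_assoc]
      ring
  obtain ⟨ε, hε0, hε1, nk, hnk, hesc⟩ := esc_list hH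
  obtain ⟨q0, hq0⟩ := pow_unbounded_of_one_lt ((ε ^ (2 * ℓ))⁻¹) hy1
  have hq : (ε ^ (2 * ℓ))⁻¹ ≤ y ^ (max q0 2) := hq0.le.trans (pow_le_pow_right₀ hy1.le (le_max_left _ _))
  have h := dim_hom (t := t) hy1 (by simpa using hcard) (max q0 2) (le_max_right _ _) (by
    intro n0
    obtain ⟨m, hm⟩ : ∃ m, m = nk (ℓ * (n0 + 1)) := ⟨_, rfl⟩
    have hmge : ℓ * (n0 + 1) ≤ m := hm ▸ hnk.le_apply
    obtain ⟨n, hn⟩ : ∃ n, n = m / ℓ := ⟨_, rfl⟩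
    have hnn : n0 + 1 ≤ n := by
      rw [hn, Nat.le_div_iff_mul_le (by omega), mul_comm]; exact hmge
    have hnm : n * ℓ ≤ m := by rw [hn]; exact Nat.div_mul_le_self _ _
    have hmn : m ≤ 2 * ℓ * n := by
      have h1 : m < (n + 1) * ℓ := by
        rw [← Nat.div_lt_iff_lt_mul (by omega), ← hn]; omega
      nlinarith
    refine ⟨n, by omega, fun ω ω' hne => ?_⟩
    have hne' : cat n (fun k => (ω k).1) ≠ cat n (fun k => (ω' k).1) := by
      intro e
      have := cat_inj _ _ _ e
      exact hne (funext fun k => Subtype.ext (congrFun this k))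
    set suf := List.replicate (m - n * ℓ) i0 with hsuf
    have p1 := cat_prod (cv := cv) (r := r) n (fun k => (ω k).1) (fun k => hr _ (ω k).2)
    have p2 := cat_prod (cv := cv) (r := r) n (fun k => (ω' k).1) (fun k => hr _ (ω' k).2)
    have key := hesc (ℓ * (n0 + 1)) (cat n (fun k => (ω k).1) ++ suf) (cat n (fun k => (ω' k).1) ++ suf)
      (by rw [← hm, List.length_append, cat_length, hsuf, List.length_replicate]; omega)
      (by rw [← hm, List.length_append, cat_length, hsuf, List.length_replicate]; omega)
      (fun e => hne' (List.append_cancel_right e))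
      (by rw [List.map_append, List.map_append, List.prod_append, List.prod_append, p1, p2])
    rw [← hm, psi_append, psi_append, psi_affine (cat n _), psi_affine (cat n fun k => (ω' k).1), p1, p2,
      add_sub_add_left_eq_sub, ← hX, ← hX] at key
    have k2 : ε ^ (2 * ℓ * n) ≤ ε ^ m := pow_le_pow_of_le_one hε0.le hε1 hmn
    have hyp : 0 < y := by linarith
    have k3 : 1 ≤ ε ^ (2 * ℓ) * y ^ (max q0 2) := by
      rwa [inv_le_iff_one_le_mul₀' (by positivity)] at hq
    calc (1:ℝ) ≤ (ε ^ (2 * ℓ) * y ^ (max q0 2)) ^ n := one_le_pow₀ k3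
      _ = ε ^ (2 * ℓ * n) * y ^ (max q0 2 * n) := by rw [mul_pow, ← pow_mul, ← pow_mul]
      _ ≤ _ := by gcongr; exact k2.trans key) hKc hKn (by
    intro w x hx
    have := psi_mem hinv (List.ofFn w.1) x hx
    rw [psi_affine, List.map_ofFn, List.prod_ofFn] at this
    have e : ∏ i, (cv ∘ (w.1 : Fin ℓ → Fin N)) i = y⁻¹ := by rw [hyi]; exact hr _ w.2
    rwa [e] at this)
  simpa using h

theorem lower (hN : 2 ≤ N) (hc : ∀ i, cv i ∈ Set.Ioo (0 : ℝ) 1) (hH : HochmanESC N cv u)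
    {K : Set ℝ} (hKc : IsCompact K) (hKn : K.Nonempty)
    (hinv : ∀ i, ∀ x ∈ K, cv i * x + u i ∈ K) {s : ℝ} (hs : ∑ i, cv i ^ s = 1) (hsum : ∑ i, cv i < 1) :
    ENNReal.ofReal s ≤ dimH K := by
  classical
  have i0 : Fin N := ⟨0, by omega⟩
  have : Nonempty (Fin N) := ⟨i0⟩
  obtain ⟨im, him⟩ := Finite.exists_max cv
  set c0 := log (cv im)⁻¹ with hc0
  have hc0p : 0 < c0 := log_pos ((one_lt_inv₀ (hc im).1).2 (hc im).2)
  have step : ∀ ℓ : ℕ, 1 ≤ ℓ → ENNReal.ofReal (s - N * log (ℓ + 1) / (ℓ * c0)) ≤ dimH K := by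
    intro ℓ hℓ
    have hpos : ∀ w : Fin ℓ → Fin N, 0 < ∏ k, cv (w k) := fun w => Finset.prod_pos fun k _ => (hc _).1
    have hone : ∑ w : Fin ℓ → Fin N, (∏ k, cv (w k)) ^ s = 1 := by
      have := Fintype.sum_pow (fun i => cv i ^ s) ℓ
      rw [hs, one_pow] at this
      rw [this]
      exact Finset.sum_congr rfl fun w _ => (finsetProd_rpow _ _ (fun k _ => (hc _).1.le) s).symm
    set ty : (Fin ℓ → Fin N) → (Fin N → Fin (ℓ + 1)) := fun w i =>
      ⟨(Finset.univ.filter fun k => w k = i).card, by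
        have := Finset.card_filter_le (Finset.univ : Finset (Fin ℓ)) (fun k => w k = i)
        simp at this; omega⟩ with hty
    have hprod : ∀ w : Fin ℓ → Fin N, ∏ k, cv (w k) = ∏ i, cv i ^ (ty w i : ℕ) := by
      intro w
      rw [← Finset.prod_fiberwise' Finset.univ w cv]
      refine Finset.prod_congr rfl fun i _ => ?_
      rw [Finset.prod_const]
    obtain ⟨κ, _, hκ⟩ := Finset.exists_le_sum_fiber_of_maps_to_of_nsmul_le_sum
      (s := (Finset.univ : Finset (Fin ℓ → Fin N))) (t := Finset.univ) (f := ty)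
      (w := fun w => (∏ k, cv (w k)) ^ s) (b := (((ℓ:ℝ) + 1) ^ N)⁻¹) (fun _ _ => Finset.mem_univ _)
      ⟨fun _ => 0, Finset.mem_univ _⟩ (by
        rw [hone]
        have : (((ℓ:ℝ) + 1) ^ N) ≠ 0 := by positivity
        simp [this])
    set W := Finset.univ.filter fun w => ty w = κ with hWdef
    obtain ⟨r, hr⟩ : ∃ r, r = ∏ i, cv i ^ (κ i : ℕ) := ⟨_, rfl⟩
    have hWr : ∀ w ∈ W, ∏ k, cv (w k) = r := by
      intro w hw
      rw [hprod, hr, (Finset.mem_filter.1 hw).2]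
    rw [Finset.sum_congr rfl fun w hw => by rw [hWr w hw], Finset.sum_const, nsmul_eq_mul] at hκ
    have hr0 : 0 < r := by rw [hr]; exact Finset.prod_pos fun i _ => pow_pos (hc i).1 _
    have hWc : 0 < (W.card : ℝ) := by
      by_contra h
      have : (W.card : ℝ) = 0 := le_antisymm (not_lt.1 h) (Nat.cast_nonneg _)
      rw [this, zero_mul] at hκ
      have : 0 < (((ℓ:ℝ) + 1) ^ N)⁻¹ := by positivity
      linarith
    have hWn : W.Nonempty := Finset.card_pos.1 (by exact_mod_cast hWc)
    obtain ⟨w0, hw0⟩ := hWn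
    have hrle : r ≤ cv im ^ ℓ := by
      rw [← hWr w0 hw0]
      calc _ ≤ ∏ _k : Fin ℓ, cv im := Finset.prod_le_prod (fun k _ => (hc _).1.le) fun k _ => him _
        _ = _ := by simp
    have hlr : ℓ * c0 ≤ log r⁻¹ := by
      rw [hc0, ← log_pow, inv_pow]
      refine log_le_log (by have := (hc im).1; positivity) ?_
      gcongr
    have hℓp : (0:ℝ) < ℓ := by exact_mod_cast hℓ
    have hlrp : 0 < log r⁻¹ := lt_of_lt_of_le (by positivity) hlr
    have hcard : log W.card < log r⁻¹ := by
      refine log_lt_log hWc ?_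
      rw [lt_inv_comm₀ hWc hr0, ← one_div, lt_div_iff₀ hWc]
      calc r * W.card = ∑ w ∈ W, ∏ k, cv (w k) := by
            rw [Finset.sum_congr rfl hWr, Finset.sum_const, nsmul_eq_mul, mul_comm]
        _ ≤ ∑ w : Fin ℓ → Fin N, ∏ k, cv (w k) :=
            Finset.sum_le_sum_of_subset_of_nonneg (Finset.subset_univ _) fun w _ _ => (hpos w).le
        _ = (∑ i, cv i) ^ ℓ := (Fintype.sum_pow _ _).symm
        _ < 1 := pow_lt_one₀ (Finset.sum_nonneg fun i _ => (hc i).1.le) hsum (by omega)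
    have h1 := blockdim hc hH i0 hℓ hKc hKn hinv W ⟨w0, hw0⟩ r hWr hcard
    refine le_trans (ENNReal.ofReal_le_ofReal ?_) h1
    have h2 := log_le_log (by positivity) hκ
    rw [log_inv, log_pow, log_mul hWc.ne' (by positivity), log_rpow hr0] at h2
    rw [le_div_iff₀ hlrp, sub_mul]
    have h3 : N * log (ℓ + 1) ≤ N * log (ℓ + 1) / (ℓ * c0) * log r⁻¹ := by
      rw [div_mul_eq_mul_div, le_div_iff₀ (by positivity)]
      have : 0 ≤ log ((ℓ:ℝ) + 1) := log_nonneg (by linarith)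
      gcongr
    have h4 : s * log r⁻¹ = - (s * log r) := by rw [log_inv]; ring
    linarith
  have hlim : Tendsto (fun ℓ : ℕ => s - N * log ((ℓ:ℝ) + 1) / (ℓ * c0)) atTop (𝓝 (s - 0)) := by
    refine tendsto_const_nhds.sub ?_
    have h1 : Tendsto (fun x : ℝ => log x / x) atTop (𝓝 0) := by
      have := Real.isLittleO_log_id_atTop.tendsto_div_nhds_zero
      exact this
    have h2 : Tendsto (fun ℓ : ℕ => (ℓ:ℝ) + 1) atTop atTop :=
      tendsto_atTop_add_const_right _ _ tendsto_natCast_atTop_atTop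
    have h3 : Tendsto (fun ℓ : ℕ => log ((ℓ:ℝ) + 1) / (ℓ + 1)) atTop (𝓝 0) := h1.comp h2
    have h4 : Tendsto (fun ℓ : ℕ => 1 + 1 / (ℓ:ℝ)) atTop (𝓝 (1 + 0)) :=
      tendsto_const_nhds.add (tendsto_const_div_atTop_nhds_zero_nat 1)
    have h5 := (h3.mul h4).const_mul (N / c0)
    rw [zero_mul, mul_zero] at h5
    refine h5.congr' ?_
    filter_upwards [eventually_ge_atTop 1] with ℓ hℓ
    have hℓp : (0:ℝ) < ℓ := by exact_mod_cast hℓ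
    field_simp
  rw [sub_zero] at hlim
  refine le_of_tendsto (ENNReal.tendsto_ofReal hlim) ?_
  filter_upwards [eventually_ge_atTop 1] with ℓ hℓ using step ℓ hℓ

end words

end HE

namespace HE

open Real

section upper

variable {N : ℕ}

/-- compositions along words -/
def SW (cv bv u v d : Fin N → ℝ) : (n : ℕ) → (Fin n → Fin N) → ℝ × ℝ → ℝ × ℝ
  | 0, _, p => p
  | n + 1, w, p => SmapGen cv bv u v d (w 0) (SW cv bv u v d n (fun k => w k.succ) p)

/-- bound for the off-diagonal term -/
def DW (cv bv d : Fin N → ℝ) : (n : ℕ) → (Fin n → Fin N) → ℝ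
  | 0, _ => 0
  | n + 1, w => |d (w 0)| * (∏ k : Fin n, cv (w k.succ)) + bv (w 0) * DW cv bv d n (fun k => w k.succ)

variable {cv bv u v d : Fin N → ℝ}

lemma SW_cover {Λ : Set (ℝ × ℝ)} (hΛ : Λ = ⋃ i, SmapGen cv bv u v d i '' Λ) (n : ℕ) :
    Λ ⊆ ⋃ w : Fin n → Fin N, SW cv bv u v d n w '' Λ := by
  induction n with
  | zero => intro p hp; exact Set.mem_iUnion.2 ⟨fun k => k.elim0, p, hp, rfl⟩
  | succ n ih =>
    intro p hp
    rw [hΛ] at hp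
    obtain ⟨i, q, hq, rfl⟩ := Set.mem_iUnion.1 hp
    obtain ⟨w, z, hz, rfl⟩ := Set.mem_iUnion.1 (ih hq)
    exact Set.mem_iUnion.2 ⟨Fin.cons i w, z, hz, by simp [SW]⟩

lemma DW_nonneg (hc : ∀ i, cv i ∈ Set.Ioo (0 : ℝ) 1) (hb : ∀ i, bv i ∈ Set.Ioo (0 : ℝ) 1) (n : ℕ) :
    ∀ w, 0 ≤ DW cv bv d n w := by
  induction n with
  | zero => intro w; exact le_rfl
  | succ n ih =>
    intro w
    exact add_nonneg (mul_nonneg (abs_nonneg _) (Finset.prod_nonneg fun k _ => (hc _).1.le))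
      (mul_nonneg (hb _).1.le (ih _))

lemma SW_dist (hc : ∀ i, cv i ∈ Set.Ioo (0 : ℝ) 1) (hb : ∀ i, bv i ∈ Set.Ioo (0 : ℝ) 1)
    (p q : ℝ × ℝ) {A : ℝ} (h1 : |p.1 - q.1| ≤ A) (h2 : |p.2 - q.2| ≤ A) (n : ℕ) :
    ∀ w, |(SW cv bv u v d n w p).1 - (SW cv bv u v d n w q).1| ≤ (∏ k, cv (w k)) * A ∧
      |(SW cv bv u v d n w p).2 - (SW cv bv u v d n w q).2| ≤
        (DW cv bv d n w + ∏ k, bv (w k)) * A := by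
  induction n with
  | zero => intro w; simp [SW, DW]; exact ⟨h1, h2⟩
  | succ n ih =>
    intro w
    obtain ⟨i1, i2⟩ := ih (fun k => w k.succ)
    rw [Fin.prod_univ_succ, Fin.prod_univ_succ]
    simp only [SW, DW, SmapGen]
    set P := SW cv bv u v d n (fun k => w k.succ) p
    set Q := SW cv bv u v d n (fun k => w k.succ) q
    have hc0 := (hc (w 0)).1
    have hb0 := (hb (w 0)).1
    constructor
    · rw [add_sub_add_right_eq_sub, ← mul_sub, abs_mul, abs_of_pos hc0, mul_assoc]
      exact mul_le_mul_of_nonneg_left i1 hc0.le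
    · have e : d (w 0) * P.1 + bv (w 0) * P.2 + v (w 0) - (d (w 0) * Q.1 + bv (w 0) * Q.2 + v (w 0)) =
        d (w 0) * (P.1 - Q.1) + bv (w 0) * (P.2 - Q.2) := by ring
      rw [e]
      refine (abs_add_le _ _).trans ?_
      rw [abs_mul, abs_mul, abs_of_pos hb0]
      have k1 := mul_le_mul_of_nonneg_left i1 (abs_nonneg (d (w 0)))
      have k2 := mul_le_mul_of_nonneg_left i2 hb0.le
      linarith

lemma sum_cons (n : ℕ) (f : (Fin (n + 1) → Fin N) → ℝ) :
    ∑ w, f w = ∑ i : Fin N, ∑ w : Fin n → Fin N, f (Fin.cons i w) := by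
  rw [← Fintype.sum_prod_type', ← Equiv.sum_comp (Fin.consEquiv fun _ => Fin N)]
  rfl

lemma DW_sum (hc : ∀ i, cv i ∈ Set.Ioo (0 : ℝ) 1) (hb : ∀ i, bv i ∈ Set.Ioo (0 : ℝ) 1)
    {s th : ℝ} (hs0 : 0 < s) (hs1 : s ≤ 1) (hth : 0 < th) (h1 : ∑ i, cv i ^ s ≤ th)
    (h2 : ∑ i, bv i ^ s ≤ th) (n : ℕ) :
    th * ∑ w, DW cv bv d n w ^ s ≤ n * (∑ i, |d i| ^ s) * th ^ n := by
  induction n with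
  | zero => simp [DW, zero_rpow hs0.ne']
  | succ n ih =>
    have hc' : ∑ w : Fin n → Fin N, (∏ k, cv (w k)) ^ s ≤ th ^ n := by
      have := Fintype.sum_pow (fun i => cv i ^ s) n
      calc _ = (∑ i, cv i ^ s) ^ n := by
            rw [this]
            exact Finset.sum_congr rfl fun w _ => (finsetProd_rpow _ _ (fun k _ => (hc _).1.le) s).symm
        _ ≤ _ := pow_le_pow_left₀ (Finset.sum_nonneg fun i _ => (rpow_pos_of_pos (hc i).1 s).le) h1 n
    have hD0 : 0 ≤ ∑ w, DW cv bv d n w ^ s :=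
      Finset.sum_nonneg fun w _ => rpow_nonneg (DW_nonneg hc hb n w) s
    have hd0 : 0 ≤ ∑ i, |d i| ^ s := Finset.sum_nonneg fun i _ => rpow_nonneg (abs_nonneg _) s
    have key : ∑ w, DW cv bv d (n + 1) w ^ s ≤
        (∑ i, |d i| ^ s) * th ^ n + th * ∑ w, DW cv bv d n w ^ s := by
      rw [sum_cons]
      calc _ ≤ ∑ i : Fin N, ∑ w : Fin n → Fin N,
            (|d i| ^ s * (∏ k, cv (w k)) ^ s + bv i ^ s * DW cv bv d n w ^ s) := by
            refine Finset.sum_le_sum fun i _ => Finset.sum_le_sum fun w _ => ?_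
            simp only [DW, Fin.cons_zero, Fin.cons_succ]
            have hp : 0 ≤ ∏ k, cv (w k) := Finset.prod_nonneg fun k _ => (hc _).1.le
            rw [← mul_rpow (abs_nonneg _) hp, ← mul_rpow (hb i).1.le (DW_nonneg hc hb n w)]
            exact rpow_add_le_add_rpow (mul_nonneg (abs_nonneg _) hp)
              (mul_nonneg (hb i).1.le (DW_nonneg hc hb n w)) hs0.le hs1
        _ = (∑ i, |d i| ^ s) * (∑ w : Fin n → Fin N, (∏ k, cv (w k)) ^ s) +
            (∑ i, bv i ^ s) * ∑ w, DW cv bv d n w ^ s := by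
            simp only [Finset.sum_add_distrib, ← Finset.mul_sum, ← Finset.sum_mul]
        _ ≤ _ := by gcongr
    calc th * ∑ w, DW cv bv d (n + 1) w ^ s ≤
        th * ((∑ i, |d i| ^ s) * th ^ n + th * ∑ w, DW cv bv d n w ^ s) := by gcongr
      _ ≤ th * ((∑ i, |d i| ^ s) * th ^ n + n * (∑ i, |d i| ^ s) * th ^ n) := by gcongr
      _ = _ := by push_cast; ring

theorem upper_s (hc : ∀ i, cv i ∈ Set.Ioo (0 : ℝ) 1) (hb : ∀ i, bv i ∈ Set.Ioo (0 : ℝ) 1)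
    {Λ : Set (ℝ × ℝ)} (hΛc : IsCompact Λ)
    (hΛ : Λ = ⋃ i, SmapGen cv bv u v d i '' Λ) {s : ℝ} (hs0 : 0 < s) (hs1 : s ≤ 1)
    (h1 : ∑ i, cv i ^ s < 1) (h2 : ∑ i, bv i ^ s < 1) : dimH Λ ≤ ENNReal.ofReal s := by
  obtain ⟨A, hA⟩ := Metric.isBounded_iff.1 hΛc.isBounded
  obtain ⟨B, hB⟩ : ∃ B, B = max A 0 := ⟨_, rfl⟩
  have hB0 : 0 ≤ B := hB ▸ le_max_right _ _
  obtain ⟨th, hth⟩ : ∃ th, th = max (1/2) (max (∑ i, cv i ^ s) (∑ i, bv i ^ s)) := ⟨_, rfl⟩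
  have hth0 : 0 < th := hth ▸ lt_of_lt_of_le (by norm_num) (le_max_left _ _)
  have hth1 : th < 1 := hth ▸ max_lt (by norm_num) (max_lt h1 h2)
  have h1' : ∑ i, cv i ^ s ≤ th := hth ▸ (le_max_left _ _).trans (le_max_right _ _)
  have h2' : ∑ i, bv i ^ s ≤ th := hth ▸ (le_max_right _ _).trans (le_max_right _ _)
  have hpw : ∀ (g : Fin N → ℝ), (∀ i, g i ∈ Set.Ioo (0:ℝ) 1) → ∑ i, g i ^ s ≤ th → ∀ n : ℕ,
      ∑ w : Fin n → Fin N, (∏ k, g (w k)) ^ s ≤ th ^ n := by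
    intro g hg h n
    have := Fintype.sum_pow (fun i => g i ^ s) n
    calc _ = (∑ i, g i ^ s) ^ n := by
          rw [this]
          exact Finset.sum_congr rfl fun w _ => (finsetProd_rpow _ _ (fun k _ => (hg _).1.le) s).symm
      _ ≤ _ := pow_le_pow_left₀ (Finset.sum_nonneg fun i _ => (rpow_pos_of_pos (hg i).1 s).le) h n
  set Δ := ∑ i, |d i| ^ s with hΔ
  set F : ℕ → ℝ := fun n => B ^ s * (th ^ n + (n * th ^ n) * (Δ / th) + th ^ n) with hF
  have hFlim : Tendsto F atTop (𝓝 0) := by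
    have a1 := tendsto_pow_atTop_nhds_zero_of_lt_one hth0.le hth1
    have a2 := tendsto_self_mul_const_pow_of_lt_one hth0.le hth1
    have := ((a1.add (a2.mul_const (Δ / th))).add a1).const_mul (B ^ s)
    simpa using this
  set G : (n : ℕ) → (Fin n → Fin N) → ℝ := fun n w =>
    (∏ k, cv (w k) + DW cv bv d n w + ∏ k, bv (w k)) * B with hG
  have hcp : ∀ n (w : Fin n → Fin N), 0 ≤ ∏ k, cv (w k) := fun n w =>
    Finset.prod_nonneg fun k _ => (hc _).1.le
  have hbp : ∀ n (w : Fin n → Fin N), 0 ≤ ∏ k, bv (w k) := fun n w =>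
    Finset.prod_nonneg fun k _ => (hb _).1.le
  have hG0 : ∀ n w, 0 ≤ G n w := fun n w =>
    mul_nonneg (add_nonneg (add_nonneg (hcp n w) (DW_nonneg hc hb n w)) (hbp n w)) hB0
  have hGsum : ∀ n, ∑ w, G n w ^ s ≤ F n := by
    intro n
    have hDs := DW_sum (d := d) hc hb hs0 hs1 hth0 h1' h2' n
    have hDs' : ∑ w, DW cv bv d n w ^ s ≤ (n * th ^ n) * (Δ / th) := by
      rw [mul_div_assoc', le_div_iff₀ hth0, mul_comm]
      linarith
    have hBs : 0 ≤ B ^ s := rpow_nonneg hB0 s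
    calc ∑ w, G n w ^ s ≤ ∑ w : Fin n → Fin N, B ^ s * ((∏ k, cv (w k)) ^ s + DW cv bv d n w ^ s +
          (∏ k, bv (w k)) ^ s) := by
          refine Finset.sum_le_sum fun w _ => ?_
          have hD0 := DW_nonneg (d := d) hc hb n w
          simp only [hG]
          rw [mul_rpow (add_nonneg (add_nonneg (hcp n w) hD0) (hbp n w)) hB0, mul_comm]
          refine mul_le_mul_of_nonneg_left ?_ hBs
          refine (rpow_add_le_add_rpow (add_nonneg (hcp n w) hD0) (hbp n w) hs0.le hs1).trans ?_
          gcongr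
          exact rpow_add_le_add_rpow (hcp n w) hD0 hs0.le hs1
      _ = B ^ s * (∑ w : Fin n → Fin N, (∏ k, cv (w k)) ^ s + ∑ w, DW cv bv d n w ^ s +
          ∑ w : Fin n → Fin N, (∏ k, bv (w k)) ^ s) := by
          rw [← Finset.mul_sum, Finset.sum_add_distrib, Finset.sum_add_distrib]
      _ ≤ F n := by
          refine mul_le_mul_of_nonneg_left ?_ hBs
          exact add_le_add (add_le_add (hpw cv hc h1' n) hDs') (hpw bv hb h2' n)
  have hdiam : ∀ n (w : Fin n → Fin N), Metric.ediam (SW cv bv u v d n w '' Λ) ≤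
      ENNReal.ofReal (G n w) := by
    intro n w
    refine Metric.ediam_le ?_
    rintro _ ⟨p, hp, rfl⟩ _ ⟨q, hq, rfl⟩
    rw [edist_dist]
    refine ENNReal.ofReal_le_ofReal ?_
    have hpq : dist p q ≤ B := (hA hp hq).trans (hB ▸ le_max_left _ _)
    rw [Prod.dist_eq, Real.dist_eq, Real.dist_eq, max_le_iff] at hpq
    obtain ⟨e1, e2⟩ := SW_dist (u := u) (v := v) (d := d) hc hb p q hpq.1 hpq.2 n w
    rw [Prod.dist_eq, Real.dist_eq, Real.dist_eq]
    have m1 := mul_nonneg (hcp n w) hB0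
    have m2 := mul_nonneg (hbp n w) hB0
    have m3 := mul_nonneg (DW_nonneg (d := d) hc hb n w) hB0
    simp only [hG]
    refine max_le ?_ ?_ <;> linarith
  have hle := Measure.hausdorffMeasure_le_liminf_sum (ι := fun n => Fin n → Fin N) s Λ (l := atTop)
    (fun n => ENNReal.ofReal (F n ^ s⁻¹)) (by
      have : Tendsto (fun n => F n ^ s⁻¹) atTop (𝓝 (0 ^ s⁻¹)) :=
        hFlim.rpow_const (Or.inr (by positivity))
      rw [zero_rpow (by positivity)] at this
      simpa using ENNReal.tendsto_ofReal this)
    (fun n w => SW cv bv u v d n w '' Λ)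
    (Eventually.of_forall fun n w => (hdiam n w).trans (ENNReal.ofReal_le_ofReal (by
      have : G n w ^ s ≤ F n := le_trans (Finset.single_le_sum (f := fun w => G n w ^ s)
        (fun w _ => rpow_nonneg (hG0 n w) s) (Finset.mem_univ w)) (hGsum n)
      calc G n w = (G n w ^ s) ^ s⁻¹ := (rpow_rpow_inv (hG0 n w) hs0.ne').symm
        _ ≤ _ := rpow_le_rpow (rpow_nonneg (hG0 n w) s) this (by positivity))))
    (Eventually.of_forall fun n => SW_cover hΛ n)
  have hle2 : liminf (fun n => ∑ w : Fin n → Fin N, Metric.ediam (SW cv bv u v d n w '' Λ) ^ s) atTop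
      ≤ liminf (fun n => ENNReal.ofReal (F n)) atTop := by
    refine liminf_le_liminf (Eventually.of_forall fun n => ?_)
    calc _ ≤ ∑ w : Fin n → Fin N, ENNReal.ofReal (G n w ^ s) := by
          refine Finset.sum_le_sum fun w _ => ?_
          rw [← ENNReal.ofReal_rpow_of_nonneg (hG0 n w) hs0.le]
          exact ENNReal.rpow_le_rpow (hdiam n w) hs0.le
      _ = ENNReal.ofReal (∑ w, G n w ^ s) :=
          (ENNReal.ofReal_sum_of_nonneg fun w _ => rpow_nonneg (hG0 n w) s).symm
      _ ≤ _ := ENNReal.ofReal_le_ofReal (hGsum n)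
  have hz : liminf (fun n => ENNReal.ofReal (F n)) atTop = 0 := by
    have := ENNReal.tendsto_ofReal hFlim
    rw [ENNReal.ofReal_zero] at this
    exact this.liminf_eq
  rw [hz] at hle2
  have hfin : μH[((s.toNNReal : NNReal) : ℝ)] Λ ≠ ⊤ := by
    rw [Real.coe_toNNReal s hs0.le]
    exact ne_top_of_le_ne_top ENNReal.zero_ne_top (hle.trans hle2)
  exact dimH_le_of_hausdorffMeasure_ne_top hfin

lemma solve_unique (hN : 2 ≤ N) {a b : Fin N → ℝ} (ha : ∀ i, a i ∈ Set.Ioo (0 : ℝ) 1)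
    (hb : ∀ i, b i ∈ Set.Ioo (0 : ℝ) 1) {s t : ℝ} (hs : ∑ i, a i ^ s = 1)
    (ht : ∑ i, a i ^ s * b i ^ (t - s) = 1) : t = s := by
  have hne : (Finset.univ : Finset (Fin N)).Nonempty := ⟨⟨0, by omega⟩, Finset.mem_univ _⟩
  rcases lt_trichotomy t s with h | h | h
  · exfalso
    have : ∑ i, a i ^ s < ∑ i, a i ^ s * b i ^ (t - s) :=
      Finset.sum_lt_sum_of_nonempty hne fun i _ => lt_mul_of_one_lt_right (rpow_pos_of_pos (ha i).1 _)
        (one_lt_rpow_of_pos_of_lt_one_of_neg (hb i).1 (hb i).2 (by linarith))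
    linarith
  · exact h
  · exfalso
    have : ∑ i, a i ^ s * b i ^ (t - s) < ∑ i, a i ^ s :=
      Finset.sum_lt_sum_of_nonempty hne fun i _ => mul_lt_of_lt_one_right (rpow_pos_of_pos (ha i).1 _)
        (rpow_lt_one (hb i).1.le (hb i).2 (by linarith))
    linarith

lemma sum_anti (hN : 2 ≤ N) {a : Fin N → ℝ} (ha : ∀ i, a i ∈ Set.Ioo (0 : ℝ) 1) {s t : ℝ} (h : s < t) :
    ∑ i, a i ^ t < ∑ i, a i ^ s :=
  Finset.sum_lt_sum_of_nonempty ⟨⟨0, by omega⟩, Finset.mem_univ _⟩ fun i _ =>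
    rpow_lt_rpow_of_exponent_gt (ha i).1 (ha i).2 h

end upper

end HE

/-- if direction-`x` dominates, the horizontal similarity dimension is at
most one (`∑ cᵢ < 1`), and the horizontal IFS satisfies Hochman's exponential separation
condition, then the Hausdorff dimension of the attractor is `s_x`. -/
theorem statement2 (N : ℕ) (hN : 2 ≤ N) (cv bv u v d : Fin N → ℝ)
    (hc : ∀ i, cv i ∈ Set.Ioo (0 : ℝ) 1) (hb : ∀ i, bv i ∈ Set.Ioo (0 : ℝ) 1)
    (Λ : Set (ℝ × ℝ)) (hΛne : Λ.Nonempty) (hΛc : IsCompact Λ)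
    (hΛ : Λ = ⋃ i, SmapGen cv bv u v d i '' Λ)
    (sx sy sxh syh dx dy : ℝ)
    (hsx : ∑ i, cv i ^ sx = 1) (hsy : ∑ i, bv i ^ sy = 1)
    (hsxh : sxh = min sx 1) (hsyh : syh = min sy 1)
    (hdx : ∑ i, cv i ^ sxh * bv i ^ (dx - sxh) = 1)
    (hdy : ∑ i, bv i ^ syh * cv i ^ (dy - syh) = 1)
    (hdom : dy ≤ dx)
    (hsum : ∑ i, cv i < 1)
    (hH : HochmanESC N cv u) : dimH Λ = ENNReal.ofReal sx := by
  have hsx1 : sx < 1 := by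
    by_contra h
    rcases (not_lt.1 h).eq_or_lt with h | h
    · rw [← h] at hsx; simp only [Real.rpow_one] at hsx; linarith
    · have := HE.sum_anti hN hc h
      simp only [Real.rpow_one] at this; linarith
  have hsx0 : 0 < sx := by
    have h0 : ∑ i, cv i ^ (0:ℝ) = N := by simp
    have hN' : (2:ℝ) ≤ N := by exact_mod_cast hN
    by_contra h
    rcases (not_lt.1 h).eq_or_lt with h | h
    · rw [h] at hsx; linarith
    · have := HE.sum_anti hN hc h; linarith
  rw [min_eq_left hsx1.le] at hsxh
  subst hsxh
  have hdxe : dx = sxh := HE.solve_unique hN hc hb hsx hdx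
  have hsyx : sy ≤ sxh := by
    rcases le_or_gt sy 1 with h | h
    · rw [min_eq_left h] at hsyh
      subst hsyh
      have := HE.solve_unique hN hb hc hsy hdy
      linarith
    · exfalso
      rw [min_eq_right h.le] at hsyh
      subst hsyh
      have h1 := HE.sum_anti hN hb h
      have h2 : ∑ i, bv i ^ (1:ℝ) ≤ ∑ i, bv i ^ (1:ℝ) * cv i ^ (dy - 1) :=
        Finset.sum_le_sum fun i _ => le_mul_of_one_le_right (Real.rpow_nonneg (hb i).1.le _)
          (Real.one_le_rpow_of_pos_of_le_one_of_nonpos (hc i).1 (hc i).2.le (by linarith))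
      linarith
  refine le_antisymm ?_ ?_
  · have hs : ∀ s ∈ Set.Ioo sxh 1, dimH Λ ≤ ENNReal.ofReal s := by
      intro s hs
      refine HE.upper_s hc hb hΛc hΛ (hsx0.trans hs.1) hs.2.le ?_ ?_
      · rw [← hsx]; exact HE.sum_anti hN hc hs.1
      · rw [← hsy]; exact HE.sum_anti hN hb (hsyx.trans_lt hs.1)
    have hlim : Tendsto ENNReal.ofReal (𝓝[>] sxh) (𝓝 (ENNReal.ofReal sxh)) :=
      (ENNReal.continuous_ofReal.tendsto sxh).mono_left nhdsWithin_le_nhds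
    refine ge_of_tendsto hlim ?_
    filter_upwards [Ioo_mem_nhdsGT hsx1] with s h using hs s h
  · have hK : IsCompact (Prod.fst '' Λ) := hΛc.image continuous_fst
    have := HE.lower (K := Prod.fst '' Λ) hN hc hH hK (hΛne.image _) (by
      rintro i _ ⟨p, hp, rfl⟩
      refine ⟨SmapGen cv bv u v d i p, ?_, rfl⟩
      rw [hΛ]
      exact Set.mem_iUnion.2 ⟨i, p, hp, rfl⟩) hsx hsum
    exact this.trans (LipschitzWith.prod_fst.dimH_image_le Λ)

end
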